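/- arXiv:1303.4172 — 7 statements merged into one kernel-verified Lean document; each statement's English description precedes it below -/
import Mathlib

section
/- Let ℓ ∈ 𝕃_∞, ν ∈ (0,1], suppose γ := max_{‖λ‖₁=1} min_i (−(Aλ)_i) > 0, and let {λ_t} be boosting iterates whose steps α_i are Wolfe steps, i.e. each α_i ≥ 0 satisfies L(A(λ_{i−1}+α_i v_i)) ≤ L(Aλ_{i−1}) − α_i(1−ν/2)·‖Aᵀ∇L(Aλ_{i−1})‖_∞ and ∇L(A(λ_{i−1}+α_i v_i))ᵀA v_i ≥ −(1−ν/4)·‖Aᵀ∇L(Aλ_{i−1})‖_∞. Let t > t₀ ≥ 0 with t ≥ 8C₁⁶·ln(m)/(γ²·ν(2−ν)). Then M(Aλ_t) := min_{k∈[m]} (−(Aλ_t)_k)/‖λ_t‖₁ ≥ γ·(2−ν)/(2·C_{t₀+1}²) − 4C₁⁴·ln(c₀)/(t·ν·γ), where c₀ := max{1, m·C_{t₀+1}·L(Aλ_{t₀})·exp(((2−ν)γ/(2·C_{t₀+1}²))·Σ_{i=1}^{t₀+1} α_i)}. -/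
open Real Finset

noncomputable section

/-- The property that `C` is a valid curvature constant at level `z`:
`C ≥ 1` and `C⁻¹ ≤ eˣ / ℓ⁽ⁱ⁾(x) ≤ C` for all `x ≤ z` and `i ∈ {0,1,2}`. -/
def CBound (ℓ : ℝ → ℝ) (z C : ℝ) : Prop :=
  1 ≤ C ∧ ∀ x ≤ z, ∀ i ≤ 2,
    C⁻¹ ≤ Real.exp x / iteratedDeriv i ℓ x ∧ Real.exp x / iteratedDeriv i ℓ x ≤ C

/-- `C_ℓ(z)`: the least valid curvature constant at level `z`. -/
def Cconst (ℓ : ℝ → ℝ) (z : ℝ) : ℝ := sInf {C : ℝ | CBound ℓ z C}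

/-- Membership in the class `𝕃`: positive, twice continuously differentiable,
strictly convex, and `C_ℓ(z) < ∞` (i.e. some valid constant exists) for every `z`. -/
def MemL (ℓ : ℝ → ℝ) : Prop :=
  (∀ x, 0 < ℓ x) ∧ ContDiff ℝ 2 ℓ ∧ StrictConvexOn ℝ Set.univ ℓ ∧
    ∀ z : ℝ, ∃ C : ℝ, CBound ℓ z C

/-- Membership in `𝕃_∞`: in `𝕃` and moreover `C_ℓ(z) → 1` as `z → −∞`. -/
def MemLinf (ℓ : ℝ → ℝ) : Prop :=
  MemL ℓ ∧ Filter.Tendsto (Cconst ℓ) Filter.atBot (nhds 1)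

variable {m n : ℕ}

/-- The empirical risk `L(Aλ) = (1/m) Σᵢ ℓ((Aλ)ᵢ)`. -/
def LL (ℓ : ℝ → ℝ) (A : Matrix (Fin m) (Fin n) ℝ) (lam : Fin n → ℝ) : ℝ :=
  (∑ i, ℓ (A.mulVec lam i)) / m

/-- The gradient vector `∇L(Aλ)`, with `i`-th entry `ℓ'((Aλ)ᵢ)/m`. -/
def gradL (ℓ : ℝ → ℝ) (A : Matrix (Fin m) (Fin n) ℝ) (lam : Fin n → ℝ) : Fin m → ℝ :=
  fun i => deriv ℓ (A.mulVec lam i) / m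

/-- `‖Aᵀ ∇L(Aλ)‖_∞`. -/
def gInf (ℓ : ℝ → ℝ) (A : Matrix (Fin m) (Fin n) ℝ) (lam : Fin n → ℝ) : ℝ :=
  ⨆ j : Fin n, |∑ i, gradL ℓ A lam i * A i j|

/-- `‖∇L(Aλ)‖₁`. -/
def gOne (ℓ : ℝ → ℝ) (A : Matrix (Fin m) (Fin n) ℝ) (lam : Fin n → ℝ) : ℝ :=
  ∑ i, |gradL ℓ A lam i|

/-- `γ̂ = ‖Aᵀ∇L(Aλ)‖_∞ / ‖∇L(Aλ)‖₁`. -/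
def gammaHat (ℓ : ℝ → ℝ) (A : Matrix (Fin m) (Fin n) ℝ) (lam : Fin n → ℝ) : ℝ :=
  gInf ℓ A lam / gOne ℓ A lam

/-- `C = C_ℓ(ℓ⁻¹(m · L(Aλ)))`. -/
def Cstep (ℓ : ℝ → ℝ) (A : Matrix (Fin m) (Fin n) ℝ) (lam : Fin n → ℝ) : ℝ :=
  Cconst ℓ (Function.invFun ℓ ((m : ℝ) * LL ℓ A lam))

/-- The (minimum `l¹`) margin `M(Aλ) = min_k (−(Aλ)_k) / ‖λ‖₁`. -/
def margin (A : Matrix (Fin m) (Fin n) ℝ) (lam : Fin n → ℝ) : ℝ :=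
  ⨅ k : Fin m, (-(A.mulVec lam k)) / (∑ j, |lam j|)

/-- The maximum margin `γ = max_{‖λ‖₁=1} min_i (−(Aλ)ᵢ)`. -/
def gammaMax (A : Matrix (Fin m) (Fin n) ℝ) : ℝ :=
  sSup {r : ℝ | ∃ lam : Fin n → ℝ, (∑ j, |lam j|) = 1 ∧ r = ⨅ i : Fin m, -(A.mulVec lam i)}

/-- Boosting iterates: `λ₀ = 0`, `λ_t = λ_{t-1} + α_t • v_t` where `v_t` is a signed
standard basis vector satisfying `∇L(Aλ_{t-1})ᵀ A v_t = −‖Aᵀ∇L(Aλ_{t-1})‖_∞`. -/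
def IsBoostSeq (ℓ : ℝ → ℝ) (A : Matrix (Fin m) (Fin n) ℝ)
    (lam : ℕ → Fin n → ℝ) (α : ℕ → ℝ) (v : ℕ → Fin n → ℝ) : Prop :=
  lam 0 = 0 ∧
  (∀ t : ℕ, 1 ≤ t → lam t = lam (t-1) + α t • v t) ∧
  (∀ t : ℕ, 1 ≤ t → ∃ s : ℝ, (s = 1 ∨ s = -1) ∧ ∃ j : Fin n, v t = s • (Pi.single j (1:ℝ) : Fin n → ℝ)) ∧
  (∀ t : ℕ, 1 ≤ t →
    ∑ i, gradL ℓ A (lam (t-1)) i * A.mulVec (v t) i = - gInf ℓ A (lam (t-1)))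

/-- The quantity `Υ_ν(γ)`. -/
def Upsilon (ν γ : ℝ) : ℝ :=
  ((2/ν) * Real.log 2 - (2/ν) * Real.log ((1+γ) ^ (1-ν) + (1-γ) ^ (1-ν))
      - Real.log (1-γ^2)) /
    (Real.log (1+γ) - Real.log (1-γ))

section helpers

lemma cb_pos {ℓ : ℝ → ℝ} (h : MemL ℓ) (x : ℝ) (i : ℕ) (hi : i ≤ 2) : 0 < iteratedDeriv i ℓ x := by
  obtain ⟨C, h1, hC⟩ := h.2.2.2 x
  have h2 := (hC x le_rfl i hi).1
  have h3 : 0 < C⁻¹ := by positivity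
  by_contra hcon
  have : Real.exp x / iteratedDeriv i ℓ x ≤ 0 :=
    div_nonpos_of_nonneg_of_nonpos (Real.exp_pos x).le (not_lt.mp hcon)
  linarith

lemma d1_pos {ℓ : ℝ → ℝ} (h : MemL ℓ) (x : ℝ) : 0 < deriv ℓ x := by
  have := cb_pos h x 1 (by norm_num)
  rwa [iteratedDeriv_one] at this

lemma d2_pos {ℓ : ℝ → ℝ} (h : MemL ℓ) (x : ℝ) : 0 < deriv (deriv ℓ) x := by
  have := cb_pos h x 2 (by norm_num)
  rwa [iteratedDeriv_succ, iteratedDeriv_one] at this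

lemma l_mono {ℓ : ℝ → ℝ} (h : MemL ℓ) : StrictMono ℓ := strictMono_of_deriv_pos (d1_pos h)

lemma l_has {ℓ : ℝ → ℝ} (h : MemL ℓ) (x : ℝ) : HasDerivAt ℓ (deriv ℓ x) x :=
  ((h.2.1.differentiable (by norm_num)) x).hasDerivAt

lemma l_has2 {ℓ : ℝ → ℝ} (h : MemL ℓ) (x : ℝ) : HasDerivAt (deriv ℓ) (deriv (deriv ℓ) x) x := by
  have h1 : ContDiff ℝ (1+1) ℓ := by
    have := h.2.1
    norm_num; exact this
  have h2 : ContDiff ℝ 1 (deriv ℓ) := (contDiff_succ_iff_deriv.mp h1).2.2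
  exact ((h2.differentiable (by norm_num)) x).hasDerivAt

lemma cconst_bound {ℓ : ℝ → ℝ} (h : MemL ℓ) (z : ℝ) : CBound ℓ z (Cconst ℓ z) := by
  have hne : {C : ℝ | CBound ℓ z C}.Nonempty := h.2.2.2 z
  have hbd : BddBelow {C : ℝ | CBound ℓ z C} := ⟨1, fun C hC => hC.1⟩
  have h1 : 1 ≤ Cconst ℓ z := le_csInf hne fun C hC => hC.1
  refine ⟨h1, fun x hx i hi => ⟨?_, ?_⟩⟩
  · have hq : 0 < Real.exp x / iteratedDeriv i ℓ x :=
      div_pos (Real.exp_pos x) (cb_pos h x i hi)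
    rw [inv_le_comm₀ (by linarith) hq]
    refine le_csInf hne fun C hC => ?_
    rw [inv_le_comm₀ hq (by linarith [hC.1])]
    exact (hC.2 x hx i hi).1
  · exact le_csInf hne fun C hC => (hC.2 x hx i hi).2

lemma cconst_mono {ℓ : ℝ → ℝ} (h : MemL ℓ) {z z' : ℝ} (hz : z ≤ z') :
    Cconst ℓ z ≤ Cconst ℓ z' := by
  refine csInf_le ⟨1, fun C hC => hC.1⟩ ?_
  have := cconst_bound h z'
  exact ⟨this.1, fun x hx => this.2 x (hx.trans hz)⟩

lemma l_range {ℓ : ℝ → ℝ} (h : MemL ℓ) {x y : ℝ} (hxy : ℓ x ≤ y) : ∃ z, ℓ z = y := by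
  have hd := d1_pos h x
  set w := x + (y - ℓ x) / deriv ℓ x with hw
  have hxw : x ≤ w := by
    have : 0 ≤ (y - ℓ x) / deriv ℓ x := div_nonneg (by linarith) hd.le
    linarith
  have hyw : y ≤ ℓ w := by
    rcases hxw.eq_or_lt with he | hlt
    · have : (y - ℓ x) / deriv ℓ x = 0 := by linarith
      rw [div_eq_zero_iff] at this
      rcases this with h0 | h0
      · rw [← he]; linarith
      · linarith
    · have := h.2.2.1.convexOn.le_slope_of_hasDerivAt (Set.mem_univ x) (Set.mem_univ w) hlt (l_has h x)
      rw [slope_def_field, le_div_iff₀ (by linarith)] at this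
      have h2 : deriv ℓ x * (w - x) = y - ℓ x := by
        rw [hw]; field_simp; ring
      linarith
  have hc : ContinuousOn ℓ (Set.Icc x w) := h.2.1.continuous.continuousOn
  obtain ⟨z, _, hz⟩ := intermediate_value_Icc hxw hc ⟨hxy, hyw⟩
  exact ⟨z, hz⟩

variable {m n : ℕ}

lemma mLL (hm : 0 < m) (ℓ : ℝ → ℝ) (A : Matrix (Fin m) (Fin n) ℝ) (lam : Fin n → ℝ) :
    (m:ℝ) * LL ℓ A lam = ∑ i, ℓ (A.mulVec lam i) := by
  have : (m:ℝ) ≠ 0 := by positivity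
  unfold LL; field_simp

lemma le_mLL (hm : 0 < m) {ℓ : ℝ → ℝ} (h : MemL ℓ) (A : Matrix (Fin m) (Fin n) ℝ)
    (lam : Fin n → ℝ) (k : Fin m) : ℓ (A.mulVec lam k) ≤ m * LL ℓ A lam := by
  rw [mLL hm]
  exact Finset.single_le_sum (f := fun i => ℓ (A.mulVec lam i)) (fun i _ => (h.1 _).le) (Finset.mem_univ k)

lemma LL_pos (hm : 0 < m) {ℓ : ℝ → ℝ} (h : MemL ℓ) (A : Matrix (Fin m) (Fin n) ℝ)
    (lam : Fin n → ℝ) : 0 < LL ℓ A lam := by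
  have h1 := le_mLL hm h A lam ⟨0, hm⟩
  have h2 := h.1 (A.mulVec lam ⟨0, hm⟩)
  have h3 : (0:ℝ) < m := by positivity
  exact pos_of_mul_pos_right (lt_of_lt_of_le h2 h1) h3.le

lemma inv_spec (hm : 0 < m) {ℓ : ℝ → ℝ} (h : MemL ℓ) (A : Matrix (Fin m) (Fin n) ℝ)
    (lam : Fin n → ℝ) : ℓ (Function.invFun ℓ (m * LL ℓ A lam)) = m * LL ℓ A lam :=
  Function.invFun_eq (l_range h (le_mLL hm h A lam ⟨0, hm⟩))

lemma cstep_mono (hm : 0 < m) {ℓ : ℝ → ℝ} (h : MemL ℓ) (A : Matrix (Fin m) (Fin n) ℝ)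
    {lam lam' : Fin n → ℝ} (hL : LL ℓ A lam ≤ LL ℓ A lam') : Cstep ℓ A lam ≤ Cstep ℓ A lam' := by
  apply cconst_mono h
  rw [← (l_mono h).le_iff_le, inv_spec hm h, inv_spec hm h]
  gcongr

lemma cstep_one {ℓ : ℝ → ℝ} (h : MemL ℓ) (A : Matrix (Fin m) (Fin n) ℝ)
    (lam : Fin n → ℝ) : 1 ≤ Cstep ℓ A lam := (cconst_bound h _).1

lemma cstep_bounds (hm : 0 < m) {ℓ : ℝ → ℝ} (h : MemL ℓ) (A : Matrix (Fin m) (Fin n) ℝ)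
    (lam : Fin n → ℝ) (x : ℝ) (hx : ℓ x ≤ m * LL ℓ A lam) :
    ℓ x ≤ Cstep ℓ A lam * Real.exp x ∧ Real.exp x ≤ Cstep ℓ A lam * ℓ x ∧
    Real.exp x ≤ Cstep ℓ A lam * deriv ℓ x ∧ deriv (deriv ℓ) x ≤ Cstep ℓ A lam * Real.exp x := by
  have hb := cconst_bound h (Function.invFun ℓ (m * LL ℓ A lam))
  change CBound ℓ _ (Cstep ℓ A lam) at hb
  have hC := hb.1
  have hxz : x ≤ Function.invFun ℓ (m * LL ℓ A lam) := by
    rw [← (l_mono h).le_iff_le, inv_spec hm h]; exact hx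
  have b0 := hb.2 x hxz 0 (by norm_num)
  have b1 := hb.2 x hxz 1 (by norm_num)
  have b2 := hb.2 x hxz 2 (by norm_num)
  rw [iteratedDeriv_zero] at b0
  rw [iteratedDeriv_one] at b1
  rw [iteratedDeriv_succ, iteratedDeriv_one] at b2
  have p0 := h.1 x
  have p1 := d1_pos h x
  have p2 := d2_pos h x
  have hC0 : 0 < Cstep ℓ A lam := by linarith
  refine ⟨?_, ?_, ?_, ?_⟩
  · have := b0.1
    rwa [le_div_iff₀ p0, inv_mul_le_iff₀ hC0] at this
  · have := b0.2
    rwa [div_le_iff₀ p0] at this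
  · have := b1.2
    rwa [div_le_iff₀ p1] at this
  · have := b2.1
    rwa [le_div_iff₀ p2, inv_mul_le_iff₀ hC0] at this

lemma gOne_eq (hm : 0 < m) {ℓ : ℝ → ℝ} (h : MemL ℓ) (A : Matrix (Fin m) (Fin n) ℝ)
    (lam : Fin n → ℝ) : gOne ℓ A lam = ∑ i, gradL ℓ A lam i := by
  unfold gOne
  refine Finset.sum_congr rfl fun i _ => abs_of_nonneg ?_
  exact div_nonneg (d1_pos h _).le (by positivity)

lemma LL_le_gOne (hm : 0 < m) {ℓ : ℝ → ℝ} (h : MemL ℓ) (A : Matrix (Fin m) (Fin n) ℝ)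
    (lam : Fin n → ℝ) : LL ℓ A lam ≤ (Cstep ℓ A lam)^2 * gOne ℓ A lam := by
  rw [gOne_eq hm h]
  unfold LL gradL
  rw [Finset.sum_div, Finset.mul_sum]
  refine Finset.sum_le_sum fun i _ => ?_
  rw [← mul_div_assoc]
  gcongr
  obtain ⟨b1, _, b2, _⟩ := cstep_bounds hm h A lam _ (le_mLL hm h A lam i)
  have := cstep_one h A lam
  nlinarith

lemma weak_dual (hm : 0 < m) {ℓ : ℝ → ℝ} (h : MemL ℓ) (A : Matrix (Fin m) (Fin n) ℝ)
    (lam : Fin n → ℝ) : gammaMax A * gOne ℓ A lam ≤ gInf ℓ A lam := by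
  have hL := LL_pos hm h A lam
  have hg : 0 < gOne ℓ A lam := by
    have h1 := LL_le_gOne hm h A lam
    exact pos_of_mul_pos_right (lt_of_lt_of_le hL h1) (by positivity)
  have hbdd : BddAbove (Set.range fun j : Fin n => |∑ i, gradL ℓ A lam i * A i j|) :=
    (Set.finite_range _).bddAbove
  rw [← le_div_iff₀ hg]
  refine Real.sSup_le ?_ ?_
  · rintro r ⟨u, hu, rfl⟩
    rw [le_div_iff₀ hg, gOne_eq hm h]
    have hinf : ∀ i, (⨅ i : Fin m, -(A.mulVec u i)) ≤ -(A.mulVec u i) := fun i =>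
      ciInf_le (Set.finite_range _).bddBelow i
    calc (⨅ i : Fin m, -(A.mulVec u i)) * ∑ i, gradL ℓ A lam i
        = ∑ i, gradL ℓ A lam i * (⨅ i : Fin m, -(A.mulVec u i)) := by
          rw [Finset.mul_sum]; exact Finset.sum_congr rfl fun i _ => mul_comm _ _
      _ ≤ ∑ i, gradL ℓ A lam i * -(A.mulVec u i) := by
          refine Finset.sum_le_sum fun i _ => mul_le_mul_of_nonneg_left (hinf i) ?_
          exact div_nonneg (d1_pos h _).le (by positivity)
      _ = ∑ j, (-u j) * ∑ i, gradL ℓ A lam i * A i j := by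
          simp only [Matrix.mulVec, dotProduct, Finset.mul_sum, ← Finset.sum_neg_distrib]
          rw [Finset.sum_comm]
          refine Finset.sum_congr rfl fun j _ => Finset.sum_congr rfl fun i _ => by ring
      _ ≤ ∑ j, |u j| * gInf ℓ A lam := by
          refine Finset.sum_le_sum fun j _ => ?_
          refine (le_abs_self _).trans ?_
          rw [abs_mul, abs_neg]
          exact mul_le_mul_of_nonneg_left (le_ciSup hbdd j) (abs_nonneg _)
      _ = gInf ℓ A lam := by rw [← Finset.sum_mul, hu, one_mul]
  · refine div_nonneg ?_ hg.le
    exact Real.iSup_nonneg fun j => abs_nonneg _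

lemma alpha_lower (hm : 0 < m) {ℓ : ℝ → ℝ} (h : MemL ℓ) (A : Matrix (Fin m) (Fin n) ℝ)
    (hγ : 0 < gammaMax A) (ν : ℝ) (hν : 0 < ν)
    (lam v : Fin n → ℝ) (a : ℝ) (hv : ∀ k, |A.mulVec v k| ≤ 1) (ha : 0 ≤ a)
    (h0 : ∑ i, gradL ℓ A lam i * A.mulVec v i = - gInf ℓ A lam)
    (hL : LL ℓ A (lam + a • v) ≤ LL ℓ A lam)
    (h1 : ∑ k, gradL ℓ A (lam + a • v) k * A.mulVec v k ≥ -(1 - ν/4) * gInf ℓ A lam) :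
    ν * gammaMax A ≤ a * (4 * (Cstep ℓ A lam)^4) := by
  set C := Cstep ℓ A lam with hCdef
  have hC1 : 1 ≤ C := cstep_one h A lam
  have hLp := LL_pos hm h A lam
  have hg := LL_le_gOne hm h A lam
  have hG := weak_dual hm h A lam
  have hgo : 0 < gOne ℓ A lam := pos_of_mul_pos_right (lt_of_lt_of_le hLp hg) (by positivity)
  have hGp : 0 < gInf ℓ A lam := lt_of_lt_of_le (by positivity) hG
  have hap : 0 < a := by
    rcases ha.eq_or_lt with he | hlt
    · exfalso
      rw [← he, zero_smul, add_zero, h0] at h1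
      nlinarith
    · exact hlt
  have hmv : ∀ s : ℝ, ∀ k, A.mulVec (lam + s • v) k = A.mulVec lam k + s * A.mulVec v k := by
    intro s k
    rw [Matrix.mulVec_add, Matrix.mulVec_smul]; simp
  set φ : ℝ → ℝ := fun s => ∑ k, deriv ℓ (A.mulVec lam k + s * A.mulVec v k) / m * A.mulVec v k with hφ
  set φ' : ℝ → ℝ := fun s => ∑ k, (deriv (deriv ℓ) (A.mulVec lam k + s * A.mulVec v k) * A.mulVec v k) / m * A.mulVec v k with hφ'
  have hder : ∀ s, HasDerivAt φ (φ' s) s := by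
    intro s
    refine HasDerivAt.fun_sum fun k _ => ?_
    refine HasDerivAt.mul_const (HasDerivAt.div_const ?_ _) _
    have hin : HasDerivAt (fun s : ℝ => A.mulVec lam k + s * A.mulVec v k) (A.mulVec v k) s := by
      simpa using ((hasDerivAt_id s).mul_const (A.mulVec v k)).const_add (A.mulVec lam k)
    exact (l_has2 h _).comp s hin
  obtain ⟨ξ, hξ, hslope⟩ := exists_hasDerivAt_eq_slope φ φ' hap
    (fun s _ => (hder s).continuousAt.continuousWithinAt) (fun s _ => hder s)
  have e0 : φ 0 = - gInf ℓ A lam := by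
    rw [← h0, hφ]; simp [gradL]
  have ea : φ a ≥ -(1 - ν/4) * gInf ℓ A lam := by
    refine le_of_le_of_eq h1 ?_
    simp only [hφ, gradL, hmv]
  have hmid : LL ℓ A (lam + ξ • v) ≤ LL ℓ A lam := by
    set s := ξ / a with hs
    have hs0 : 0 ≤ s := div_nonneg hξ.1.le ha
    have hs1 : s ≤ 1 := by rw [hs, div_le_one hap]; exact hξ.2.le
    have hsa : s * a = ξ := by rw [hs]; field_simp
    have key : LL ℓ A (lam + ξ • v) ≤ (1 - s) * LL ℓ A lam + s * LL ℓ A (lam + a • v) := by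
      unfold LL
      rw [mul_div_assoc', mul_div_assoc', ← add_div, Finset.mul_sum, Finset.mul_sum, ← Finset.sum_add_distrib]
      gcongr with k
      have := h.2.2.1.convexOn.2 (Set.mem_univ (A.mulVec lam k)) (Set.mem_univ (A.mulVec (lam + a • v) k))
        (by linarith : 0 ≤ 1 - s) hs0 (by ring)
      simp only [smul_eq_mul] at this
      refine le_trans (le_of_eq ?_) this
      congr 1
      rw [hmv, hmv, ← hsa]; ring
    nlinarith
  have hφb : φ' ξ ≤ C^2 * LL ℓ A lam := by
    refine le_trans ?_ (mul_le_mul_of_nonneg_left hmid (by positivity))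
    unfold LL
    rw [hφ', Finset.sum_div, Finset.mul_sum]
    refine Finset.sum_le_sum fun k _ => ?_
    rw [← hmv]
    have hk := (le_mLL hm h A (lam + ξ • v) k).trans
      (mul_le_mul_of_nonneg_left hmid (by positivity : (0:ℝ) ≤ m))
    obtain ⟨_, b1, _, b2⟩ := cstep_bounds hm h A lam _ hk
    have hd := d2_pos h (A.mulVec (lam + ξ • v) k)
    have hv2 : A.mulVec v k * A.mulVec v k ≤ 1 := by
      have := hv k
      rw [abs_le] at this; nlinarith
    rw [← mul_div_assoc, div_mul_eq_mul_div]
    refine div_le_div_of_nonneg_right ?_ (Nat.cast_nonneg m)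
    calc deriv (deriv ℓ) (A.mulVec (lam + ξ • v) k) * A.mulVec v k * A.mulVec v k
        = deriv (deriv ℓ) (A.mulVec (lam + ξ • v) k) * (A.mulVec v k * A.mulVec v k) := by ring
      _ ≤ deriv (deriv ℓ) (A.mulVec (lam + ξ • v) k) * 1 := mul_le_mul_of_nonneg_left hv2 hd.le
      _ ≤ C^2 * ℓ (A.mulVec (lam + ξ • v) k) := by nlinarith
  rw [hslope, e0, sub_zero, div_le_iff₀ hap] at hφb
  have h2 : ν / 4 * gInf ℓ A lam ≤ C^2 * LL ℓ A lam * a := by linarith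
  have h3 : ν / 4 * (gammaMax A * gOne ℓ A lam) ≤ C^2 * (C^2 * gOne ℓ A lam) * a := by
    calc _ ≤ ν / 4 * gInf ℓ A lam := by gcongr
      _ ≤ _ := h2
      _ ≤ _ := by gcongr
  have h4 : (ν * gammaMax A) * gOne ℓ A lam ≤ (a * (4 * C^4)) * gOne ℓ A lam := by nlinarith
  exact le_of_mul_le_mul_right h4 hgo

end helpers

/-- margin lower bound for Wolfe steps. -/
theorem margin_wolfe {m n : ℕ} (hm : 0 < m) (hn : 0 < n)
    (A : Matrix (Fin m) (Fin n) ℝ) (hA : ∀ i j, |A i j| ≤ 1)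
    (ℓ : ℝ → ℝ) (hℓ : MemLinf ℓ)
    (ν : ℝ) (hν : ν ∈ Set.Ioc (0:ℝ) 1)
    (hγ : 0 < gammaMax A)
    (lam : ℕ → Fin n → ℝ) (α : ℕ → ℝ) (v : ℕ → Fin n → ℝ)
    (hseq : IsBoostSeq ℓ A lam α v)
    (hwolfe : ∀ i : ℕ, 1 ≤ i →
      0 ≤ α i ∧
      LL ℓ A (lam (i-1) + α i • v i) ≤
        LL ℓ A (lam (i-1)) - α i * (1 - ν/2) * gInf ℓ A (lam (i-1)) ∧
      ∑ k, gradL ℓ A (lam (i-1) + α i • v i) k * A.mulVec (v i) k ≥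
        -(1 - ν/4) * gInf ℓ A (lam (i-1)))
    (t₀ t : ℕ) (ht : t₀ < t)
    (htlb : 8 * (Cstep ℓ A (lam 0))^6 * Real.log m / ((gammaMax A)^2 * ν * (2-ν)) ≤ (t:ℝ)) :
    margin A (lam t) ≥
      gammaMax A * ((2-ν) / (2 * (Cstep ℓ A (lam t₀))^2)) -
      4 * (Cstep ℓ A (lam 0))^4 *
        Real.log (max 1
          ((m:ℝ) * Cstep ℓ A (lam t₀) * LL ℓ A (lam t₀) *
            Real.exp (((2-ν) * gammaMax A / (2 * (Cstep ℓ A (lam t₀))^2)) *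
              ∑ i ∈ Finset.Icc 1 (t₀+1), α i))) /
        ((t:ℝ) * ν * gammaMax A) := by
  have h := hℓ.1
  obtain ⟨hl0, hstep, hbasis, hdir⟩ := hseq
  have hν0 := hν.1
  have hν1 := hν.2
  have hα : ∀ i, 1 ≤ i → 0 ≤ α i := fun i hi => (hwolfe i hi).1
  have hgnn : ∀ u, 0 ≤ gInf ℓ A u := fun u => Real.iSup_nonneg fun j => abs_nonneg _
  have hdesc : ∀ i, LL ℓ A (lam (i+1)) ≤
      LL ℓ A (lam i) - α (i+1) * (1 - ν/2) * gInf ℓ A (lam i) := by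
    intro i
    have := (hwolfe (i+1) (by omega)).2.1
    rw [← hstep (i+1) (by omega)] at this
    simpa using this
  have hanti : Antitone fun i => LL ℓ A (lam i) := by
    refine antitone_nat_of_succ_le fun i => ?_
    have h1 := hdesc i
    have h2 : 0 ≤ α (i+1) * (1 - ν/2) * gInf ℓ A (lam i) :=
      mul_nonneg (mul_nonneg (hα _ (by omega)) (by linarith)) (hgnn _)
    linarith
  -- bound on `A v`
  have hAv : ∀ i, 1 ≤ i → ∀ k, |A.mulVec (v i) k| ≤ 1 := by
    intro i hi k
    obtain ⟨s, hs, j, hj⟩ := hbasis i hi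
    rw [hj, Matrix.mulVec_smul, Matrix.mulVec_single_one]
    rcases hs with rfl | rfl <;> simpa using hA k j
  set γ := gammaMax A with hγdef
  set C1 := Cstep ℓ A (lam 0) with hC1def
  have hC1 : 1 ≤ C1 := cstep_one h A _
  have hαlow : ∀ i, ν * γ / (4 * C1^4) ≤ α (i+1) := by
    intro i
    have hw := hwolfe (i+1) (by omega)
    have hs := hstep (i+1) (by omega)
    have hd := hdir (i+1) (by omega)
    simp only [Nat.add_sub_cancel] at hw hs hd
    have hlow := alpha_lower hm h A hγ ν hν0 (lam i) (v (i+1)) (α (i+1)) (hAv _ (by omega))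
      hw.1 hd (by rw [← hs]; exact hanti (Nat.le_succ i)) hw.2.2
    have hCi := cstep_mono hm h A (hanti (Nat.zero_le i))
    have hCi1 := cstep_one h A (lam i)
    rw [div_le_iff₀ (by positivity)]
    refine hlow.trans ?_
    have := hw.1
    gcongr
  set S : ℕ → ℝ := fun t => ∑ i ∈ Finset.Icc 1 t, α i with hS
  have hSsucc : ∀ i, S (i+1) = S i + α (i+1) := fun i => Finset.sum_Icc_succ_top (by omega) _
  have hS0 : S 0 = 0 := by simp [hS]
  have hSlow : ∀ t : ℕ, (t:ℝ) * (ν * γ / (4 * C1^4)) ≤ S t := by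
    intro t
    induction t with
    | zero => simp [hS0]
    | succ i ih =>
      rw [hSsucc]; push_cast
      linarith [hαlow i]
  have hnorm : ∀ t : ℕ, ∑ j, |lam t j| ≤ S t := by
    intro t
    induction t with
    | zero => simp [hl0, hS0]
    | succ i ih =>
      rw [hSsucc, hstep (i+1) (by omega)]
      obtain ⟨s, hs, j0, hj⟩ := hbasis (i+1) (by omega)
      have hv1 : ∑ j, |v (i+1) j| = 1 := by
        rw [hj]
        have : ∀ j, |(s • (Pi.single j0 (1:ℝ) : Fin n → ℝ)) j| = if j = j0 then 1 else 0 := by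
          intro j
          rcases hs with rfl | rfl <;> by_cases hjj : j = j0 <;> simp [Pi.single_apply, hjj]
        rw [Finset.sum_congr rfl fun j _ => this j]
        simp
      calc ∑ j, |(lam (i+1-1) + α (i+1) • v (i+1)) j|
          ≤ ∑ j, (|lam i j| + α (i+1) * |v (i+1) j|) := by
            refine Finset.sum_le_sum fun j _ => ?_
            simp only [Nat.add_sub_cancel, Pi.add_apply, Pi.smul_apply, smul_eq_mul]
            refine (abs_add_le _ _).trans ?_
            rw [abs_mul, abs_of_nonneg (hα (i+1) (by omega))]
        _ = (∑ j, |lam i j|) + α (i+1) := by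
            rw [Finset.sum_add_distrib, ← Finset.mul_sum, hv1, mul_one]
        _ ≤ _ := by linarith
  -- exponential decrease from `s` on
  have hexp : ∀ s i : ℕ, s ≤ i → LL ℓ A (lam i) ≤ LL ℓ A (lam s) *
      Real.exp (-((2-ν) * γ / (2 * (Cstep ℓ A (lam s))^2)) * (S i - S s)) := by
    intro s i hsi
    induction i, hsi using Nat.le_induction with
    | base => simp
    | succ i hsi ih =>
      set C := Cstep ℓ A (lam s)
      set g := (2-ν) * γ / (2 * C^2) with hg
      have hC : 1 ≤ C := cstep_one h A _
      have hCi : Cstep ℓ A (lam i) ≤ C := cstep_mono hm h A (hanti hsi)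
      have hCi1 := cstep_one h A (lam i)
      have hLp := LL_pos hm h A (lam i)
      have q1 := LL_le_gOne hm h A (lam i)
      have q2 := weak_dual hm h A (lam i)
      have hgo : 0 ≤ gOne ℓ A (lam i) := Finset.sum_nonneg fun k _ => abs_nonneg _
      have q3 : LL ℓ A (lam i) ≤ C^2 * gOne ℓ A (lam i) := q1.trans (by gcongr)
      have q4 : g * LL ℓ A (lam i) ≤ (1 - ν/2) * gInf ℓ A (lam i) := by
        calc g * LL ℓ A (lam i) ≤ g * (C^2 * gOne ℓ A (lam i)) := by
              have : 0 ≤ g := div_nonneg (mul_nonneg (by linarith) hγ.le) (by positivity)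
              gcongr
          _ = (1 - ν/2) * (γ * gOne ℓ A (lam i)) := by
              rw [hg]; field_simp
          _ ≤ _ := mul_le_mul_of_nonneg_left q2 (by linarith)
      have hai := hα (i+1) (by omega)
      have q5 : LL ℓ A (lam (i+1)) ≤ LL ℓ A (lam i) * Real.exp (-g * α (i+1)) := by
        have e1 := Real.add_one_le_exp (-g * α (i+1))
        have e2 := hdesc i
        have e3 := mul_le_mul_of_nonneg_left q4 hai
        have e4 := mul_le_mul_of_nonneg_left e1 hLp.le
        linarith
      refine q5.trans ?_
      refine (mul_le_mul_of_nonneg_right ih (Real.exp_pos _).le).trans (le_of_eq ?_)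
      rw [mul_assoc, ← Real.exp_add, hSsucc]
      congr 2; ring
  have htp : (0:ℝ) < t := by
    have : 0 < t := by omega
    exact_mod_cast this
  have hmp : (0:ℝ) < m := by exact_mod_cast hm
  have hSt : 0 < S t := lt_of_lt_of_le (by positivity) (hSlow t)
  -- nonnegative margins
  have hneg : ∀ k, A.mulVec (lam t) k ≤ 0 := by
    intro k
    rw [← (l_mono h).le_iff_le]
    refine (le_mLL hm h A (lam t) k).trans ?_
    have e1 := hexp 0 t (Nat.zero_le _)
    have e2 : LL ℓ A (lam 0) = ℓ 0 := by
      unfold LL; rw [hl0]; simp; field_simp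
    rw [e2, hS0, sub_zero] at e1
    have e3 : Real.log m ≤ (2-ν) * γ / (2 * C1^2) * S t := by
      rw [div_le_iff₀ (by have : 0 < 2 - ν := by linarith
                          positivity)] at htlb
      have e4 : (2-ν) * γ / (2 * C1^2) * ((t:ℝ) * (ν * γ / (4 * C1^4))) ≤ (2-ν) * γ / (2 * C1^2) * S t :=
        mul_le_mul_of_nonneg_left (hSlow t)
          (div_nonneg (mul_nonneg (by linarith) hγ.le) (by positivity))
      refine le_trans ?_ e4
      have e5 : (2-ν) * γ / (2 * C1^2) * ((t:ℝ) * (ν * γ / (4 * C1^4))) =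
          (t * (γ^2 * ν * (2-ν))) / (8 * C1^6) := by
        field_simp; ring
      rw [e5, le_div_iff₀ (by positivity)]
      linarith
    have e6 : Real.exp (-((2-ν) * γ / (2 * C1^2)) * S t) ≤ (m:ℝ)⁻¹ := by
      rw [← Real.exp_log hmp, ← Real.exp_neg]
      apply Real.exp_le_exp.mpr
      linarith
    calc (m:ℝ) * LL ℓ A (lam t) ≤ m * (ℓ 0 * (m:ℝ)⁻¹) := by
          gcongr
          exact e1.trans (mul_le_mul_of_nonneg_left e6 (h.1 0).le)
      _ = ℓ 0 := by field_simp
  set C := Cstep ℓ A (lam t₀) with hCdef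
  have hC : 1 ≤ C := cstep_one h A _
  set g := (2-ν) * γ / (2 * C^2) with hg
  have hgn : 0 ≤ g := div_nonneg (mul_nonneg (by linarith) hγ.le) (by positivity)
  set c0 := max 1 ((m:ℝ) * C * LL ℓ A (lam t₀) * Real.exp (g * ∑ i ∈ Finset.Icc 1 (t₀+1), α i)) with hc0
  have hc1 : 1 ≤ c0 := le_max_left _ _
  have hlogc : 0 ≤ Real.log c0 := Real.log_nonneg hc1
  have hmain : ∀ k, g * S t - Real.log c0 ≤ -(A.mulVec (lam t) k) := by
    intro k
    have f1 := le_mLL hm h A (lam t) k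
    have f2 : (m:ℝ) * LL ℓ A (lam t) ≤ m * LL ℓ A (lam t₀) := by
      gcongr; exact hanti ht.le
    obtain ⟨_, f3, _, _⟩ := cstep_bounds hm h A (lam t₀) _ (f1.trans f2)
    have f4 := hexp t₀ t ht.le
    have hL0 := LL_pos hm h A (lam t₀)
    have f5 : Real.exp (A.mulVec (lam t) k) ≤ c0 * Real.exp (-(g * S t)) := by
      calc Real.exp (A.mulVec (lam t) k) ≤ C * ℓ (A.mulVec (lam t) k) := f3
        _ ≤ C * (m * (LL ℓ A (lam t₀) * Real.exp (-g * (S t - S t₀)))) := by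
            have := f1.trans (mul_le_mul_of_nonneg_left f4 hmp.le)
            gcongr
        _ = (m * C * LL ℓ A (lam t₀) * Real.exp (g * S t₀)) * Real.exp (-(g * S t)) := by
            rw [show -g * (S t - S t₀) = g * S t₀ + -(g * S t) by ring, Real.exp_add]; ring
        _ ≤ c0 * Real.exp (-(g * S t)) := by
            gcongr
            refine le_trans ?_ (le_max_right _ _)
            have : S t₀ ≤ S (t₀+1) := by
              rw [hSsucc]; linarith [hα (t₀+1) (by omega)]
            change _ ≤ (m:ℝ) * C * LL ℓ A (lam t₀) * Real.exp (g * S (t₀+1))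
            gcongr
    rw [← Real.exp_log (by linarith : 0 < c0), ← Real.exp_add] at f5
    have := Real.exp_le_exp.mp f5
    linarith
  haveI : Nonempty (Fin m) := ⟨⟨0, hm⟩⟩
  have hfin : g - Real.log c0 / S t ≤ margin A (lam t) := by
    refine le_ciInf fun k => ?_
    have hN := hnorm t
    have hN0 : 0 ≤ ∑ j, |lam t j| := Finset.sum_nonneg fun j _ => abs_nonneg _
    have hy : 0 ≤ -(A.mulVec (lam t) k) := by linarith [hneg k]
    have hyS : g - Real.log c0 / S t ≤ -(A.mulVec (lam t) k) / S t := by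
      rw [le_div_iff₀ hSt, sub_mul, div_mul_cancel₀ _ hSt.ne']
      exact hmain k
    rcases hN0.eq_or_lt with he | hlt
    · have hz : lam t = 0 := by
        funext j
        have := (Finset.sum_eq_zero_iff_of_nonneg (fun j _ => abs_nonneg (lam t j))).mp he.symm j (Finset.mem_univ j)
        simpa using this
      rw [hz] at hyS ⊢
      simpa using hyS
    · exact hyS.trans (div_le_div_of_nonneg_left hy hlt hN)
  have hlast : Real.log c0 / S t ≤ 4 * C1^4 * Real.log c0 / ((t:ℝ) * ν * γ) := by
    have hx : 4 * C1^4 * Real.log c0 / ((t:ℝ) * ν * γ) = Real.log c0 / ((t:ℝ) * (ν * γ / (4 * C1^4))) := by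
      field_simp
    rw [hx]
    exact div_le_div_of_nonneg_left hlogc (by positivity) (hSlow t)
  have hgg : γ * ((2-ν) / (2 * C^2)) = g := by rw [hg]; ring
  rw [hgg]
  linarith
end
end

section
/- Let ℓ = exp, suppose γ := max_{‖λ‖₁=1} min_i (−(Aλ)_i) satisfies γ ∈ (0,1), and let ε ∈ (0,γ]. Then there exist a shrinkage parameter ν ∈ (0,1] and an integer T such that the boosting iterates {λ_t} with AdaBoost steps α_t = α_ada_t := (ν/2)·ln((1+γ_t)/(1−γ_t)) satisfy M(Aλ_t) ≥ γ − ε for all t ≥ T. More precisely, for any fixed ν ∈ (0,1] and any θ ∈ [0,γ) with θ < Υ_ν(γ), there exists T such that M(Aλ_t) ≥ θ for all t ≥ T. -/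
open Real Finset

noncomputable section

variable {m n : ℕ}

theorem aux_hasDeriv (x : ℝ) (hx : 0 < x) (s : ℝ) :
    HasDerivAt (fun s : ℝ => Real.log (Real.cosh (s * x)) / x) (Real.tanh (s * x)) s := by
  have h1 : HasDerivAt (fun s : ℝ => s * x) x s := by
    simpa using (hasDerivAt_id s).mul_const x
  have h2 := ((h1.cosh).log (Real.cosh_pos _).ne').div_const x
  have h3 : Real.tanh (s * x) = Real.sinh (s * x) * x / Real.cosh (s * x) / x := by
    rw [Real.tanh_eq_sinh_div_cosh]
    have := (Real.cosh_pos (s * x)).ne'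
    field_simp
  rw [h3]
  exact h2

theorem aux_tanh_mono {a b : ℝ} (h : a ≤ b) : Real.tanh a ≤ Real.tanh b := by
  rw [Real.tanh_eq_sinh_div_cosh, Real.tanh_eq_sinh_div_cosh,
    div_le_div_iff₀ (Real.cosh_pos _) (Real.cosh_pos _)]
  have : 0 ≤ Real.sinh (b - a) := Real.sinh_nonneg_iff.2 (by linarith)
  rw [Real.sinh_sub] at this
  linarith

/-- Monotonicity of the rate, in the hyperbolic parametrisation. -/
theorem aux_rate_mono {x y c : ℝ} (hx : 0 < x) (hxy : x ≤ y) (hc0 : 0 ≤ c) (hc1 : c ≤ 1) :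
    (Real.log (Real.cosh x) - Real.log (Real.cosh (c * x))) / x ≤
    (Real.log (Real.cosh y) - Real.log (Real.cosh (c * y))) / y := by
  have hd : ∀ s : ℝ, HasDerivAt (fun s : ℝ => Real.log (Real.cosh (s * y)) / y -
      Real.log (Real.cosh (s * x)) / x) (Real.tanh (s * y) - Real.tanh (s * x)) s := fun s =>
    (aux_hasDeriv y (hx.trans_le hxy) s).sub (aux_hasDeriv x hx s)
  have hm := monotoneOn_of_deriv_nonneg (convex_Ici (0:ℝ))
    (fun s _ => (hd s).continuousAt.continuousWithinAt)
    (fun s _ => (hd s).differentiableAt.differentiableWithinAt)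
    (fun s hs => by
      rw [(hd s).deriv]
      have hs : 0 < s := by simpa using hs
      have := aux_tanh_mono (mul_le_mul_of_nonneg_left hxy hs.le)
      linarith)
  have := hm (Set.mem_Ici.2 hc0) (Set.mem_Ici.2 zero_le_one) hc1
  simp only [one_mul] at this
  rw [sub_div, sub_div]
  linarith

theorem aux_one_add (x : ℝ) : 1 + Real.tanh x = Real.exp x / Real.cosh x := by
  rw [Real.tanh_eq_sinh_div_cosh, ← Real.cosh_add_sinh]
  have := (Real.cosh_pos x).ne'
  field_simp

theorem aux_one_sub (x : ℝ) : 1 - Real.tanh x = Real.exp (-x) / Real.cosh x := by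
  rw [Real.tanh_eq_sinh_div_cosh, ← Real.cosh_sub_sinh]
  have := (Real.cosh_pos x).ne'
  field_simp

theorem aux_log_one_add (x : ℝ) : Real.log (1 + Real.tanh x) = x - Real.log (Real.cosh x) := by
  rw [aux_one_add, Real.log_div (Real.exp_pos _).ne' (Real.cosh_pos x).ne', Real.log_exp]

theorem aux_log_one_sub (x : ℝ) : Real.log (1 - Real.tanh x) = -x - Real.log (Real.cosh x) := by
  rw [aux_one_sub, Real.log_div (Real.exp_pos _).ne' (Real.cosh_pos x).ne', Real.log_exp]

theorem aux_log_ratio (x : ℝ) :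
    Real.log ((1 + Real.tanh x) / (1 - Real.tanh x)) = 2 * x := by
  have h1 := Real.tanh_lt_one x
  have h2 := Real.neg_one_lt_tanh x
  rw [Real.log_div (by linarith) (by linarith), aux_log_one_add, aux_log_one_sub]
  ring

theorem aux_log_sum (x c : ℝ) :
    Real.log ((1 + Real.tanh x) ^ c + (1 - Real.tanh x) ^ c) =
      Real.log 2 + Real.log (Real.cosh (c * x)) - c * Real.log (Real.cosh x) := by
  have h1 := Real.tanh_lt_one x
  have h2 := Real.neg_one_lt_tanh x
  have : (1 + Real.tanh x) ^ c + (1 - Real.tanh x) ^ c =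
      2 * Real.cosh (c * x) * Real.exp (-(c * Real.log (Real.cosh x))) := by
    rw [Real.rpow_def_of_pos (by linarith), Real.rpow_def_of_pos (by linarith),
      aux_log_one_add, aux_log_one_sub, Real.cosh_eq (c * x)]
    have e1 : (x - Real.log (Real.cosh x)) * c = c * x + -(c * Real.log (Real.cosh x)) := by ring
    have e2 : (-x - Real.log (Real.cosh x)) * c = -(c * x) + -(c * Real.log (Real.cosh x)) := by
      ring
    rw [e1, e2, Real.exp_add, Real.exp_add]
    ring
  rw [this, Real.log_mul (by have := Real.cosh_pos (c * x); positivity) (Real.exp_pos _).ne',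
    Real.log_mul two_ne_zero (Real.cosh_pos _).ne', Real.log_exp]
  ring

theorem aux_Upsilon (ν x : ℝ) (hν : 0 < ν) (hx : 0 < x) :
    Upsilon ν (Real.tanh x) =
      (Real.log (Real.cosh x) - Real.log (Real.cosh ((1 - ν) * x))) / x / ν := by
  have h1 := Real.tanh_lt_one x
  have h2 := Real.neg_one_lt_tanh x
  have e : (1 - Real.tanh x ^ 2) = (1 + Real.tanh x) * (1 - Real.tanh x) := by ring
  unfold Upsilon
  rw [aux_log_sum, e, Real.log_mul (by linarith) (by linarith), aux_log_one_add, aux_log_one_sub]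
  have : x - Real.log (Real.cosh x) - (-x - Real.log (Real.cosh x)) = 2 * x := by ring
  rw [this]
  field_simp
  ring

/-- As the shrinkage vanishes the rate approaches the margin. -/
theorem aux_Upsilon_lt {g θ : ℝ} (hg : g ∈ Set.Ioo (0:ℝ) 1) (hθ : θ < g) :
    ∃ ν ∈ Set.Ioc (0:ℝ) 1, θ < Upsilon ν g := by
  obtain ⟨x, hx, rfl⟩ : ∃ x, 0 < x ∧ Real.tanh x = g :=
    ⟨Real.artanh g, Real.artanh_pos hg, Real.tanh_artanh ⟨by linarith [hg.1], hg.2⟩⟩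
  have hc : ContinuousAt (fun s : ℝ => Real.tanh (s * x)) 1 := by
    simp only [Real.tanh_eq_sinh_div_cosh]
    have : ∀ s : ℝ, Real.cosh (s * x) ≠ 0 := fun s => (Real.cosh_pos _).ne'
    exact (by fun_prop (disch := assumption) :
      Continuous fun s : ℝ => Real.sinh (s * x) / Real.cosh (s * x)).continuousAt
  have hev := hc.eventually (lt_mem_nhds (show θ < Real.tanh (1 * x) by simpa using hθ))
  obtain ⟨δ, hδ, hb⟩ := Metric.eventually_nhds_iff.1 hev
  refine ⟨min (δ / 2) 1, ⟨by positivity, min_le_right _ _⟩, ?_⟩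
  set ν := min (δ / 2) 1 with hνd
  have hν : 0 < ν := by positivity
  have hνδ : ν < δ := lt_of_le_of_lt (min_le_left _ _) (by linarith)
  obtain ⟨ξ, hξ, he⟩ := exists_hasDerivAt_eq_slope
    (fun s : ℝ => Real.log (Real.cosh (s * x)) / x) (fun s => Real.tanh (s * x))
    (show 1 - ν < 1 by linarith)
    (fun s _ => (aux_hasDeriv x hx s).continuousAt.continuousWithinAt)
    (fun s _ => aux_hasDeriv x hx s)
  have := hb (y := ξ) (by
    rw [Real.dist_eq, abs_lt]; constructor <;> linarith [hξ.1, hξ.2])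
  rw [he] at this
  rw [aux_Upsilon ν x hν hx]
  rwa [one_mul, ← sub_div, sub_sub_cancel] at this

theorem aux_gOne (A : Matrix (Fin m) (Fin n) ℝ) (lam : Fin n → ℝ) :
    gOne Real.exp A lam = (∑ i, Real.exp (A.mulVec lam i)) / m := by
  unfold gOne gradL
  rw [Finset.sum_div]
  refine Finset.sum_congr rfl fun i _ => ?_
  rw [Real.deriv_exp, abs_of_nonneg (by positivity)]

theorem aux_gOne_pos (hm : 0 < m) (A : Matrix (Fin m) (Fin n) ℝ) (lam : Fin n → ℝ) :
    0 < gOne Real.exp A lam := by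
  have : Nonempty (Fin m) := ⟨⟨0, hm⟩⟩
  rw [aux_gOne]
  have : (0:ℝ) < m := by exact_mod_cast hm
  exact div_pos (Finset.sum_pos (fun i _ => Real.exp_pos _) Finset.univ_nonempty) this

theorem aux_grad_pos (hm : 0 < m) (A : Matrix (Fin m) (Fin n) ℝ) (lam : Fin n → ℝ) (i : Fin m) :
    0 < gradL Real.exp A lam i := by
  have : (0:ℝ) < m := by exact_mod_cast hm
  unfold gradL
  rw [Real.deriv_exp]
  positivity

theorem aux_le_gInf (A : Matrix (Fin m) (Fin n) ℝ) (lam : Fin n → ℝ) (j : Fin n) :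
    |∑ i, gradL Real.exp A lam i * A i j| ≤ gInf Real.exp A lam :=
  le_ciSup (f := fun j => |∑ i, gradL Real.exp A lam i * A i j|) (Set.finite_range _).bddAbove j

theorem aux_gOne_eq (hm : 0 < m) (A : Matrix (Fin m) (Fin n) ℝ) (lam : Fin n → ℝ) :
    gOne Real.exp A lam = ∑ i, gradL Real.exp A lam i :=
  Finset.sum_congr rfl fun i _ => abs_of_pos (aux_grad_pos hm A lam i)

/-- Weak duality. -/
theorem aux_dual (hm : 0 < m) (A : Matrix (Fin m) (Fin n) ℝ) (lam μ : Fin n → ℝ)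
    (hμ : ∑ j, |μ j| = 1) :
    (⨅ i : Fin m, -(A.mulVec μ i)) * gOne Real.exp A lam ≤ gInf Real.exp A lam := by
  have h1 : (⨅ i : Fin m, -(A.mulVec μ i)) * gOne Real.exp A lam ≤
      ∑ i, gradL Real.exp A lam i * -(A.mulVec μ i) := by
    rw [aux_gOne_eq hm, Finset.mul_sum]
    refine Finset.sum_le_sum fun i _ => ?_
    rw [mul_comm]
    exact mul_le_mul_of_nonneg_left
      (ciInf_le (f := fun i => -(A.mulVec μ i)) (Set.finite_range _).bddBelow i)
      (aux_grad_pos hm A lam i).le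
  refine h1.trans ?_
  have h2 : ∑ i, gradL Real.exp A lam i * -(A.mulVec μ i) =
      ∑ j, -(μ j) * ∑ i, gradL Real.exp A lam i * A i j := by
    simp only [Matrix.mulVec, dotProduct, Finset.mul_sum, ← Finset.sum_neg_distrib]
    rw [Finset.sum_comm]
    exact Finset.sum_congr rfl fun j _ => Finset.sum_congr rfl fun i _ => by ring
  rw [h2]
  calc _ ≤ ∑ j, |μ j| * gInf Real.exp A lam := by
        refine Finset.sum_le_sum fun j _ => ?_
        refine (le_abs_self _).trans ?_
        rw [abs_mul, abs_neg]
        exact mul_le_mul_of_nonneg_left (aux_le_gInf A lam j) (abs_nonneg _)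
    _ = gInf Real.exp A lam := by rw [← Finset.sum_mul, hμ, one_mul]

theorem aux_single_norm (s : ℝ) (hs : s = 1 ∨ s = -1) (j : Fin n) :
    ∑ k, |(s • (Pi.single j (1:ℝ) : Fin n → ℝ)) k| = 1 := by
  rw [Finset.sum_eq_single j]
  · rcases hs with rfl | rfl <;> simp
  · intro b _ hb; simp [Pi.single_eq_of_ne hb]
  · simp

theorem aux_gammaHat_ge (hm : 0 < m) (hn : 0 < n) (A : Matrix (Fin m) (Fin n) ℝ)
    (lam : Fin n → ℝ) : gammaMax A ≤ gammaHat Real.exp A lam := by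
  unfold gammaMax gammaHat
  refine csSup_le ⟨_, _, aux_single_norm 1 (Or.inl rfl) ⟨0, hn⟩, rfl⟩ ?_
  rintro r ⟨μ, hμ, rfl⟩
  rw [le_div_iff₀ (aux_gOne_pos hm A lam)]
  exact aux_dual hm A lam μ hμ

theorem aux_mulVec_bound (A : Matrix (Fin m) (Fin n) ℝ) (hA : ∀ i j, |A i j| ≤ 1)
    (μ : Fin n → ℝ) (i : Fin m) : |A.mulVec μ i| ≤ ∑ j, |μ j| := by
  refine (Finset.abs_sum_le_sum_abs (fun j => A i j * μ j) Finset.univ).trans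
    (Finset.sum_le_sum fun j _ => ?_)
  rw [abs_mul]
  exact mul_le_of_le_one_left (abs_nonneg _) (hA i j)

theorem aux_gammaMax_ge (hm : 0 < m) (A : Matrix (Fin m) (Fin n) ℝ) (hA : ∀ i j, |A i j| ≤ 1)
    (μ : Fin n → ℝ) (hμ : ∑ j, |μ j| = 1) (r : ℝ) (h : ∀ i, r ≤ -(A.mulVec μ i)) :
    r ≤ gammaMax A := by
  have : Nonempty (Fin m) := ⟨⟨0, hm⟩⟩
  refine (le_ciInf h).trans (le_csSup ⟨1, ?_⟩ ⟨μ, hμ, rfl⟩)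
  rintro r ⟨κ, hκ, rfl⟩
  refine (ciInf_le (f := fun i => -(A.mulVec κ i)) (Set.finite_range _).bddBelow ⟨0, hm⟩).trans ?_
  have := aux_mulVec_bound A hA κ ⟨0, hm⟩
  rw [hκ] at this
  linarith [neg_abs_le (A.mulVec κ ⟨0, hm⟩)]

theorem aux_gammaHat_lt (hm : 0 < m) (A : Matrix (Fin m) (Fin n) ℝ)
    (hA : ∀ i j, |A i j| ≤ 1) (hγ : gammaMax A < 1)
    (lam v : Fin n → ℝ) (hv : ∑ j, |v j| = 1)
    (hvg : ∑ i, gradL Real.exp A lam i * A.mulVec v i = - gInf Real.exp A lam) :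
    gammaHat Real.exp A lam < 1 := by
  unfold gammaHat
  rw [div_lt_one (aux_gOne_pos hm A lam)]
  by_contra hcon
  push Not at hcon
  have hb : ∀ i, |A.mulVec v i| ≤ 1 := fun i => hv ▸ aux_mulVec_bound A hA v i
  have hnn : ∀ i ∈ (Finset.univ : Finset (Fin m)),
      0 ≤ gradL Real.exp A lam i * (1 + A.mulVec v i) := fun i _ =>
    mul_nonneg (aux_grad_pos hm A lam i).le (by linarith [(abs_le.1 (hb i)).1])
  have hsum : ∑ i, gradL Real.exp A lam i * (1 + A.mulVec v i) = 0 := by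
    refine le_antisymm ?_ (Finset.sum_nonneg hnn)
    simp only [mul_add, mul_one, Finset.sum_add_distrib]
    rw [hvg, ← aux_gOne_eq hm]
    linarith
  have hz := (Finset.sum_eq_zero_iff_of_nonneg hnn).1 hsum
  have : (1:ℝ) ≤ gammaMax A := aux_gammaMax_ge hm A hA v hv 1 fun i => by
    rcases mul_eq_zero.1 (hz i (Finset.mem_univ i)) with h | h
    · exact absurd h (aux_grad_pos hm A lam i).ne'
    · linarith
  linarith

/-- One-step decrease of the exponential sum. -/
theorem aux_step (hm : 0 < m) (A : Matrix (Fin m) (Fin n) ℝ)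
    (hA : ∀ i j, |A i j| ≤ 1)
    (lam v : Fin n → ℝ) (hv : ∑ j, |v j| = 1)
    (hvg : ∑ i, gradL Real.exp A lam i * A.mulVec v i = - gInf Real.exp A lam)
    (ν x : ℝ) (hx : gammaHat Real.exp A lam = Real.tanh x) :
    ∑ i, Real.exp (A.mulVec (lam + (ν * x) • v) i) ≤
      (∑ i, Real.exp (A.mulVec lam i)) * (Real.cosh ((1 - ν) * x) / Real.cosh x) := by
  have hm' : (0:ℝ) < m := by exact_mod_cast hm
  have hb : ∀ i, |A.mulVec v i| ≤ 1 := fun i => hv ▸ aux_mulVec_bound A hA v i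
  have hg : ∑ i, Real.exp (A.mulVec lam i) * A.mulVec v i =
      - (Real.tanh x * ∑ i, Real.exp (A.mulVec lam i)) := by
    have h1 : gInf Real.exp A lam = Real.tanh x * gOne Real.exp A lam := by
      rw [← hx, gammaHat, div_mul_cancel₀ _ (aux_gOne_pos hm A lam).ne']
    rw [h1, aux_gOne] at hvg
    have h2 : ∑ i, gradL Real.exp A lam i * A.mulVec v i =
        (∑ i, Real.exp (A.mulVec lam i) * A.mulVec v i) / m := by
      rw [Finset.sum_div]
      refine Finset.sum_congr rfl fun i _ => ?_
      simp only [gradL, Real.deriv_exp]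
      ring
    rw [h2] at hvg
    field_simp at hvg
    linarith
  calc ∑ i, Real.exp (A.mulVec (lam + (ν * x) • v) i)
      ≤ ∑ i, Real.exp (A.mulVec lam i) *
          (Real.cosh (ν * x) + A.mulVec v i * Real.sinh (ν * x)) := by
        refine Finset.sum_le_sum fun i _ => ?_
        rw [Matrix.mulVec_add, Matrix.mulVec_smul, Pi.add_apply, Pi.smul_apply, smul_eq_mul,
          Real.exp_add, mul_comm (ν * x)]
        exact mul_le_mul_of_nonneg_left (Real.exp_mul_le_cosh_add_mul_sinh (hb i) _)
          (Real.exp_pos _).le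
    _ = (∑ i, Real.exp (A.mulVec lam i)) * Real.cosh (ν * x) +
          (∑ i, Real.exp (A.mulVec lam i) * A.mulVec v i) * Real.sinh (ν * x) := by
        rw [Finset.sum_mul, Finset.sum_mul, ← Finset.sum_add_distrib]
        exact Finset.sum_congr rfl fun i _ => by ring
    _ = _ := by
        rw [hg, show (1 - ν) * x = x - ν * x by ring, Real.cosh_sub, Real.tanh_eq_sinh_div_cosh]
        have := (Real.cosh_pos x).ne'
        field_simp
        ring

theorem aux_main (hm : 0 < m) (hn : 0 < n)
    (A : Matrix (Fin m) (Fin n) ℝ) (hA : ∀ i j, |A i j| ≤ 1)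
    (hγ : gammaMax A ∈ Set.Ioo (0:ℝ) 1) (ν : ℝ) (hν : ν ∈ Set.Ioc (0:ℝ) 1)
    (θ : ℝ) (hθ0 : 0 ≤ θ) (hθ : θ < Upsilon ν (gammaMax A))
    (lam : ℕ → Fin n → ℝ) (α : ℕ → ℝ) (v : ℕ → Fin n → ℝ)
    (hB : IsBoostSeq Real.exp A lam α v)
    (hα : ∀ i : ℕ, 1 ≤ i → α i = (ν/2) * Real.log
          ((1 + gammaHat Real.exp A (lam (i-1))) / (1 - gammaHat Real.exp A (lam (i-1))))) :
    ∃ T : ℕ, ∀ t ≥ T, margin A (lam t) ≥ θ := by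
  obtain ⟨h0, hs, hv, hvg⟩ := hB
  have : Nonempty (Fin m) := ⟨⟨0, hm⟩⟩
  have hm' : (0:ℝ) < m := by exact_mod_cast hm
  set x0 := Real.artanh (gammaMax A) with hx0d
  have hx0 : 0 < x0 := Real.artanh_pos hγ
  have hx0t : Real.tanh x0 = gammaMax A := Real.tanh_artanh ⟨by linarith [hγ.1], hγ.2⟩
  set U := Upsilon ν (gammaMax A) with hU
  have hUe : U = (Real.log (Real.cosh x0) - Real.log (Real.cosh ((1 - ν) * x0))) / x0 / ν := by
    rw [hU, ← hx0t, aux_Upsilon ν x0 hν.1 hx0]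
  have hvn : ∀ t : ℕ, ∑ j, |v (t + 1) j| = 1 := fun t => by
    obtain ⟨s, hs1, j, hj⟩ := hv (t + 1) (by omega)
    rw [hj]; exact aux_single_norm s hs1 j
  have hvg' : ∀ t : ℕ, ∑ i, gradL Real.exp A (lam t) i * A.mulVec (v (t + 1)) i
      = - gInf Real.exp A (lam t) := fun t => hvg (t + 1) (by omega)
  have hx : ∀ t : ℕ, ∃ x, x0 ≤ x ∧ gammaHat Real.exp A (lam t) = Real.tanh x ∧
      α (t + 1) = ν * x := fun t => by
    have h1 := aux_gammaHat_ge hm hn A (lam t)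
    have h2 := aux_gammaHat_lt hm A hA hγ.2 (lam t) (v (t + 1)) (hvn t) (hvg' t)
    have h3 := Real.tanh_artanh (x := gammaHat Real.exp A (lam t)) ⟨by linarith [hγ.1], h2⟩
    refine ⟨Real.artanh (gammaHat Real.exp A (lam t)),
      Real.artanh_le_artanh (by linarith [hγ.1]) h2 h1, h3.symm, ?_⟩
    rw [hα (t + 1) (by omega), Nat.add_sub_cancel]
    nth_rewrite 1 2 [← h3]
    rw [aux_log_ratio]
    ring
  choose x hxx hxg hxα using hx
  have hαpos : ∀ t, ν * x0 ≤ α (t + 1) := fun t => by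
    rw [hxα]; exact mul_le_mul_of_nonneg_left (hxx t) hν.1.le
  have hstep : ∀ t, lam (t + 1) = lam t + (ν * x t) • v (t + 1) := fun t => by
    rw [hs (t + 1) (by omega), Nat.add_sub_cancel, hxα]
  have hSpos : ∀ t, 0 < ∑ i, Real.exp (A.mulVec (lam t) i) := fun t =>
    Finset.sum_pos (fun i _ => Real.exp_pos _) Finset.univ_nonempty
  have hlog : ∀ t, Real.log (∑ i, Real.exp (A.mulVec (lam t) i)) ≤
      Real.log m - U * ∑ s ∈ Finset.range t, α (s + 1) := by
    intro t
    induction t with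
    | zero => simp [h0]
    | succ t ih =>
      have h1 := aux_step hm A hA (lam t) (v (t + 1)) (hvn t) (hvg' t) ν (x t) (hxg t)
      rw [← hstep] at h1
      have h2 := Real.log_le_log (hSpos (t + 1)) h1
      have hc1 := Real.cosh_pos (x t)
      have hc2 := Real.cosh_pos ((1 - ν) * x t)
      rw [Real.log_mul (hSpos t).ne' (by positivity), Real.log_div hc2.ne' hc1.ne'] at h2
      have hxp : 0 < x t := hx0.trans_le (hxx t)
      have h3 := aux_rate_mono (c := 1 - ν) hx0 (hxx t) (by linarith [hν.2]) (by linarith [hν.1])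
      have h4 : U * α (t + 1) ≤
          Real.log (Real.cosh (x t)) - Real.log (Real.cosh ((1 - ν) * x t)) := by
        rw [hUe, hxα, ← mul_assoc, div_mul_cancel₀ _ hν.1.ne']
        exact (le_div_iff₀ hxp).1 h3
      rw [Finset.sum_range_succ, mul_add]
      linarith
  have hnorm : ∀ t, ∑ j, |lam t j| ≤ ∑ s ∈ Finset.range t, α (s + 1) := by
    intro t
    induction t with
    | zero => simp [h0]
    | succ t ih =>
      rw [Finset.sum_range_succ]
      have hp : 0 ≤ α (t + 1) := le_trans (mul_nonneg hν.1.le hx0.le) (hαpos t)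
      calc ∑ j, |lam (t + 1) j| ≤ ∑ j, (|lam t j| + α (t + 1) * |v (t + 1) j|) := by
            refine Finset.sum_le_sum fun j _ => ?_
            rw [hstep, ← hxα, Pi.add_apply, Pi.smul_apply, smul_eq_mul]
            refine (abs_add_le _ _).trans ?_
            rw [abs_mul, abs_of_nonneg hp]
        _ ≤ _ := by
            rw [Finset.sum_add_distrib, ← Finset.mul_sum, hvn, mul_one]
            linarith
  have hgrow : ∀ t : ℕ, (t : ℝ) * (ν * x0) ≤ ∑ s ∈ Finset.range t, α (s + 1) := by
    intro t
    have := Finset.card_nsmul_le_sum (Finset.range t) (fun s => α (s + 1)) (ν * x0)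
      (fun s _ => hαpos s)
    simpa using this
  have hw : 0 < (U - θ) * (ν * x0) := mul_pos (by linarith) (mul_pos hν.1 hx0)
  obtain ⟨T, hT⟩ := exists_nat_gt (Real.log m / ((U - θ) * (ν * x0)))
  refine ⟨T, fun t ht => ?_⟩
  set N := ∑ s ∈ Finset.range t, α (s + 1) with hN
  have hN0 : 0 ≤ ∑ j, |lam t j| := Finset.sum_nonneg fun j _ => abs_nonneg _
  have hbig : Real.log m < (U - θ) * N := by
    rw [div_lt_iff₀ hw] at hT
    have h1 : (T:ℝ) ≤ t := by exact_mod_cast ht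
    have h2 := mul_le_mul_of_nonneg_left (hgrow t) (show 0 ≤ U - θ by linarith)
    have h3 := mul_le_mul_of_nonneg_right h1 hw.le
    nlinarith
  have hkey : ∀ k, θ * ∑ j, |lam t j| < -(A.mulVec (lam t) k) := by
    intro k
    have h1 : A.mulVec (lam t) k ≤ Real.log (∑ i, Real.exp (A.mulVec (lam t) i)) := by
      rw [Real.le_log_iff_exp_le (hSpos t)]
      exact Finset.single_le_sum (f := fun i => Real.exp (A.mulVec (lam t) i))
        (fun i _ => (Real.exp_pos _).le) (Finset.mem_univ k)
    have h2 := hlog t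
    have h3 := mul_le_mul_of_nonneg_left (hnorm t) hθ0
    rw [← hN] at h2 h3
    nlinarith
  have hpos : 0 < ∑ j, |lam t j| := by
    have h1 := hkey ⟨0, hm⟩
    have h2 := (neg_abs_le _).trans_eq' rfl |>.trans (le_refl (A.mulVec (lam t) ⟨0, hm⟩))
    have h3 := aux_mulVec_bound A hA (lam t) ⟨0, hm⟩
    have h4 := mul_nonneg hθ0 hN0
    linarith
  unfold margin
  refine le_ciInf fun k => ?_
  rw [le_div_iff₀ hpos]
  exact (hkey k).le

/-- with the exponential loss and AdaBoost steps, suitable shrinkage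
yields margins at least `γ − ε` eventually; more precisely, for any `ν` and any
target `θ ∈ [0,γ)` with `θ < Υ_ν(γ)`, margins are eventually at least `θ`. -/
theorem margin_ada_exp {m n : ℕ} (hm : 0 < m) (hn : 0 < n)
    (A : Matrix (Fin m) (Fin n) ℝ) (hA : ∀ i j, |A i j| ≤ 1)
    (hγ : gammaMax A ∈ Set.Ioo (0:ℝ) 1)
    (ε : ℝ) (hε : ε ∈ Set.Ioc (0:ℝ) (gammaMax A)) :
    (∃ ν ∈ Set.Ioc (0:ℝ) 1,
      ∀ (lam : ℕ → Fin n → ℝ) (α : ℕ → ℝ) (v : ℕ → Fin n → ℝ),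
        IsBoostSeq Real.exp A lam α v →
        (∀ i : ℕ, 1 ≤ i → α i = (ν/2) * Real.log
          ((1 + gammaHat Real.exp A (lam (i-1))) / (1 - gammaHat Real.exp A (lam (i-1))))) →
        ∃ T : ℕ, ∀ t ≥ T, margin A (lam t) ≥ gammaMax A - ε) ∧
    (∀ ν ∈ Set.Ioc (0:ℝ) 1, ∀ θ : ℝ, 0 ≤ θ → θ < gammaMax A →
      θ < Upsilon ν (gammaMax A) →
      ∀ (lam : ℕ → Fin n → ℝ) (α : ℕ → ℝ) (v : ℕ → Fin n → ℝ),
        IsBoostSeq Real.exp A lam α v →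
        (∀ i : ℕ, 1 ≤ i → α i = (ν/2) * Real.log
          ((1 + gammaHat Real.exp A (lam (i-1))) / (1 - gammaHat Real.exp A (lam (i-1))))) →
        ∃ T : ℕ, ∀ t ≥ T, margin A (lam t) ≥ θ) := by
  refine ⟨?_, fun ν hν θ h0 _ hθ lam α v hB hα =>
    aux_main hm hn A hA hγ ν hν θ h0 hθ lam α v hB hα⟩
  obtain ⟨ν, hν, h⟩ := aux_Upsilon_lt hγ (show gammaMax A - ε < gammaMax A by linarith [hε.1])
  exact ⟨ν, hν, fun lam α v hB hα =>
    aux_main hm hn A hA hγ ν hν _ (by linarith [hε.2]) h lam α v hB hα⟩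
end
end

section
/- Let A ∈ {−1,+1}^{m×n} be a binary boosting matrix, let ℓ ∈ 𝕃_∞, suppose γ := max_{‖λ‖₁=1} min_i (−(Aλ)_i) satisfies γ ∈ (0,1), and let ε > 0. Then there exist a shrinkage parameter ν ∈ (0,1] and an integer T such that the boosting iterates {λ_t} with shrunk optimal steps α_t = α_opt_t := ν·α*_t, where α*_t minimizes α ↦ L(A(λ_{t−1} + α·v_t)), satisfy M(Aλ_t) ≥ γ − ε for all t ≥ T. -/
open Real Finset

noncomputable section

variable {m n : ℕ}

/-- Basic facts about `ℓ` used throughout. -/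
structure Good (ℓ D E : ℝ → ℝ) : Prop where
  h0 : ∀ x, 0 < ℓ x
  h1 : ∀ x, HasDerivAt ℓ (D x) x
  h2 : ∀ x, HasDerivAt D (E x) x
  p1 : ∀ x, 0 < D x
  p2 : ∀ x, 0 < E x

/-- Two-sided exponential bounds below the level `z`. -/
def EB (ℓ D E : ℝ → ℝ) (z C : ℝ) : Prop :=
  1 ≤ C ∧ ∀ x ≤ z, (ℓ x ≤ C * exp x ∧ exp x ≤ C * ℓ x) ∧ (D x ≤ C * exp x ∧ exp x ≤ C * D x)
    ∧ (E x ≤ C * exp x ∧ exp x ≤ C * E x)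

lemma cb_aux {C e d : ℝ} (hC : 1 ≤ C) (he : 0 < e) (h : C⁻¹ ≤ e / d ∧ e / d ≤ C) :
    0 < d ∧ d ≤ C * e ∧ e ≤ C * d := by
  have hC0 : 0 < C := by linarith
  have h1 : 0 < e / d := lt_of_lt_of_le (inv_pos.2 hC0) h.1
  have hd : 0 < d := by
    by_contra hd
    have := div_nonpos_of_nonneg_of_nonpos he.le (not_lt.1 hd)
    linarith
  refine ⟨hd, ?_, ?_⟩
  · have := h.1
    rw [inv_eq_one_div, div_le_div_iff₀ hC0 hd] at this
    linarith
  · exact (div_le_iff₀ hd).1 h.2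

lemma good_of_memL {ℓ : ℝ → ℝ} (h : MemL ℓ) : Good ℓ (deriv ℓ) (deriv (deriv ℓ)) := by
  obtain ⟨hp, hc, -, hb⟩ := h
  have hc' : ContDiff ℝ 1 (deriv ℓ) := by
    have : ContDiff ℝ (1 + 1) ℓ := by simpa [one_add_one_eq_two] using hc
    exact (contDiff_succ_iff_deriv.1 this).2.2
  refine ⟨hp, fun x => ((hc.differentiable (by norm_num)) x).hasDerivAt,
    fun x => ((hc'.differentiable (by norm_num)) x).hasDerivAt, ?_, ?_⟩
  · intro x
    obtain ⟨C, hC, hx⟩ := hb x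
    have := cb_aux hC (exp_pos x) (hx x le_rfl 1 (by norm_num))
    simpa [iteratedDeriv_one] using this.1
  · intro x
    obtain ⟨C, hC, hx⟩ := hb x
    have := cb_aux hC (exp_pos x) (hx x le_rfl 2 (by norm_num))
    simpa [iteratedDeriv_succ, iteratedDeriv_zero] using this.1

lemma EB_of_CBound {ℓ : ℝ → ℝ} {z C : ℝ} (h : CBound ℓ z C) :
    EB ℓ (deriv ℓ) (deriv (deriv ℓ)) z C := by
  obtain ⟨hC, hx⟩ := h
  refine ⟨hC, fun x hxz => ⟨?_, ?_, ?_⟩⟩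
  · have := cb_aux hC (exp_pos x) (hx x hxz 0 (by norm_num))
    simpa [iteratedDeriv_zero] using this.2
  · have := cb_aux hC (exp_pos x) (hx x hxz 1 (by norm_num))
    simpa [iteratedDeriv_one] using this.2
  · have := cb_aux hC (exp_pos x) (hx x hxz 2 (by norm_num))
    simpa [iteratedDeriv_succ, iteratedDeriv_zero] using this.2

lemma EB_mono {ℓ D E : ℝ → ℝ} (g : Good ℓ D E) {z C C' : ℝ} (h : EB ℓ D E z C) (hC : C ≤ C') :
    EB ℓ D E z C' := by
  refine ⟨h.1.trans hC, fun x hx => ?_⟩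
  obtain ⟨⟨a, b⟩, ⟨c, d⟩, e, f⟩ := h.2 x hx
  have k := (exp_pos x).le
  have k0 := (g.h0 x).le
  have k1 := (g.p1 x).le
  have k2 := (g.p2 x).le
  refine ⟨⟨a.trans ?_, b.trans ?_⟩, ⟨c.trans ?_, d.trans ?_⟩, e.trans ?_, f.trans ?_⟩ <;> gcongr

lemma exists_EB {ℓ : ℝ → ℝ} (h : MemLinf ℓ) {C : ℝ} (hC : 1 < C) :
    ∃ z, EB ℓ (deriv ℓ) (deriv (deriv ℓ)) z C := by
  obtain ⟨z, hz⟩ := (h.2.eventually (gt_mem_nhds hC)).exists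
  obtain ⟨c, hc, hlt⟩ := exists_lt_of_csInf_lt (h.1.2.2.2 z) hz
  exact ⟨z, EB_mono (good_of_memL h.1) (EB_of_CBound hc) hlt.le⟩

namespace Good

variable {ℓ D E : ℝ → ℝ}

lemma smono (g : Good ℓ D E) : StrictMono ℓ :=
  strictMono_of_deriv_pos fun x => by rw [(g.h1 x).deriv]; exact g.p1 x

lemma dmono (g : Good ℓ D E) : StrictMono D :=
  strictMono_of_deriv_pos fun x => by rw [(g.h2 x).deriv]; exact g.p2 x

lemma conv (g : Good ℓ D E) : ConvexOn ℝ Set.univ ℓ := by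
  apply MonotoneOn.convexOn_of_deriv convex_univ
  · exact fun x _ => (g.h1 x).continuousAt.continuousWithinAt
  · exact fun x _ => (g.h1 x).differentiableAt.differentiableWithinAt
  · intro x _ y _ hxy
    rw [(g.h1 x).deriv, (g.h1 y).deriv]
    exact g.dmono.monotone hxy

/-- tangent line inequality -/
lemma tangent (g : Good ℓ D E) (x y : ℝ) : ℓ x + D x * (y - x) ≤ ℓ y := by
  rcases lt_trichotomy x y with h | h | h
  · obtain ⟨c, hc, he⟩ := exists_hasDerivAt_eq_slope ℓ D h
      (fun x _ => (g.h1 x).continuousAt.continuousWithinAt) (fun x _ => g.h1 x)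
    have h3 : 0 < y - x := by linarith
    rw [eq_div_iff h3.ne'] at he
    have := mul_le_mul_of_nonneg_right (g.dmono hc.1).le h3.le
    linarith
  · subst h; simp
  · obtain ⟨c, hc, he⟩ := exists_hasDerivAt_eq_slope ℓ D h
      (fun x _ => (g.h1 x).continuousAt.continuousWithinAt) (fun x _ => g.h1 x)
    have h3 : 0 < x - y := by linarith
    rw [eq_div_iff h3.ne'] at he
    have := mul_le_mul_of_nonneg_right (g.dmono hc.2).le h3.le
    linarith

lemma unbdd (g : Good ℓ D E) (M : ℝ) : ∃ z, M ≤ ℓ z := by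
  refine ⟨(M - ℓ 0) / D 0, ?_⟩
  have := g.tangent 0 ((M - ℓ 0) / D 0)
  have h := g.p1 0
  rw [sub_zero, mul_div_cancel₀ _ h.ne'] at this
  linarith

end Good

lemma EB.cmp {ℓ D E : ℝ → ℝ} (g : Good ℓ D E) {z C : ℝ} (h : EB ℓ D E z C) {u w : ℝ} (hu : u ≤ z)
    (hw : w ≤ z) : D u ≤ C ^ 2 * exp (u - w) * D w := by
  have hC := h.1
  have h1 := (h.2 u hu).2.1.1
  have h2 := (h.2 w hw).2.1.2
  have : exp u = exp (u - w) * exp w := by rw [← exp_add]; congr 1; ring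
  calc D u ≤ C * exp u := h1
    _ = C * exp (u - w) * exp w := by rw [this]; ring
    _ ≤ C * exp (u - w) * (C * D w) := by gcongr
    _ = _ := by ring

section step

variable {m : ℕ} {ℓ D E : ℝ → ℝ}

/-- the convexity bound along the line -/
lemma line_conv (g : Good ℓ D E) (x a : Fin m → ℝ) (b θ : ℝ) (h0 : 0 ≤ θ) (h1 : θ ≤ 1) :
    ∑ i, ℓ (x i + θ * b * a i) ≤ (1 - θ) * ∑ i, ℓ (x i) + θ * ∑ i, ℓ (x i + b * a i) := by
  rw [Finset.mul_sum, Finset.mul_sum, ← Finset.sum_add_distrib]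
  refine Finset.sum_le_sum fun i _ => ?_
  have := g.conv.2 (Set.mem_univ (x i)) (Set.mem_univ (x i + b * a i))
    (sub_nonneg.2 h1) h0 (by ring)
  simp only [smul_eq_mul] at this
  convert this using 2
  ring

lemma le_of_sum_le (g : Good ℓ D E) (x : Fin m → ℝ) (z : ℝ) (h : ∑ i, ℓ (x i) ≤ ℓ z) (i : Fin m) :
    x i ≤ z := by
  apply g.smono.le_iff_le.1
  refine le_trans ?_ h
  exact Finset.single_le_sum (f := fun i => ℓ (x i)) (fun j _ => (g.h0 _).le) (Finset.mem_univ i)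

lemma line_deriv (g : Good ℓ D E) (x a : Fin m → ℝ) (s : ℝ) :
    HasDerivAt (fun s => ∑ i, ℓ (x i + s * a i)) (∑ i, D (x i + s * a i) * a i) s := by
  apply HasDerivAt.fun_sum
  intro i _
  have h : HasDerivAt (fun s => x i + s * a i) (a i) s := by
    simpa using ((hasDerivAt_id s).mul_const (a i)).const_add (x i)
  exact (g.h1 _).comp s h

/-- slow-but-sure decrease -/
lemma coarse (g : Good ℓ D E) {z C : ℝ} (h : EB ℓ D E (z + 1) C) (x a : Fin m → ℝ)
    (ha : ∀ i, a i = 1 ∨ a i = -1) (hx : ∀ i, x i ≤ z) {γ : ℝ} (hγ : 0 < γ)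
    (hd : ∑ i, D (x i) * a i ≤ - γ * ∑ i, D (x i)) {β : ℝ} (hβ : 0 ≤ β) (hβ1 : β ≤ 1) :
    ∑ i, ℓ (x i + β * a i) ≤ (1 - β * γ / C ^ 2 + β ^ 2 * (C ^ 2 * exp 1)) * ∑ i, ℓ (x i) := by
  have hC := h.1
  have hC0 : 0 < C := by linarith
  have key : ∀ i, ℓ (x i + β * a i) ≤
      ℓ (x i) + β * (D (x i) * a i) + β ^ 2 * (C ^ 2 * exp 1) * ℓ (x i) := by
    intro i
    have t := g.tangent (x i + β * a i) (x i)
    have hEup : ∀ y ≤ x i + 1, E y ≤ C ^ 2 * exp 1 * ℓ (x i) := by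
      intro y hy
      have h1 := (h.2 y (by linarith [hx i])).2.2.1
      have h2 := (h.2 (x i) (by linarith [hx i])).1.2
      calc E y ≤ C * exp y := h1
        _ ≤ C * exp (x i + 1) := by gcongr
        _ = C * exp 1 * exp (x i) := by rw [exp_add]; ring
        _ ≤ C * exp 1 * (C * ℓ (x i)) := by gcongr
        _ = _ := by ring
    have mv : ∀ u w, u ≤ w → w ≤ x i + 1 → D w - D u ≤ C ^ 2 * exp 1 * ℓ (x i) * (w - u) := by
      intro u w huw hw
      rcases huw.eq_or_lt with rfl | huw
      · simp
      obtain ⟨c, hc, he⟩ := exists_hasDerivAt_eq_slope D E huw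
        (fun x _ => (g.h2 x).continuousAt.continuousWithinAt) (fun x _ => g.h2 x)
      have h3 : 0 < w - u := by linarith
      rw [eq_div_iff h3.ne'] at he
      rw [← he]
      gcongr
      exact hEup c (by linarith [hc.2])
    rcases ha i with e | e
    · rw [e] at t ⊢
      have := mv (x i) (x i + β * 1) (by linarith) (by linarith)
      have := mul_le_mul_of_nonneg_left this hβ
      nlinarith
    · rw [e] at t ⊢
      have := mv (x i + β * -1) (x i) (by linarith) (by linarith)
      have := mul_le_mul_of_nonneg_left this hβ
      nlinarith
  have hl : ∑ i, ℓ (x i) ≤ C ^ 2 * ∑ i, D (x i) := by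
    rw [Finset.mul_sum]
    refine Finset.sum_le_sum fun i _ => ?_
    have h1 := (h.2 (x i) (by linarith [hx i])).1.1
    have h2 := (h.2 (x i) (by linarith [hx i])).2.1.2
    calc ℓ (x i) ≤ C * exp (x i) := h1
      _ ≤ C * (C * D (x i)) := by gcongr
      _ = _ := by ring
  have hl' : (∑ i, ℓ (x i)) / C ^ 2 ≤ ∑ i, D (x i) := by
    rw [div_le_iff₀ (by positivity)]; linarith
  calc ∑ i, ℓ (x i + β * a i) ≤ ∑ i, (ℓ (x i) + β * (D (x i) * a i)
          + β ^ 2 * (C ^ 2 * exp 1) * ℓ (x i)) := Finset.sum_le_sum fun i _ => key i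
    _ = ∑ i, ℓ (x i) + β * ∑ i, D (x i) * a i + β ^ 2 * (C ^ 2 * exp 1) * ∑ i, ℓ (x i) := by
        rw [Finset.sum_add_distrib, Finset.sum_add_distrib, Finset.mul_sum, Finset.mul_sum]
    _ ≤ ∑ i, ℓ (x i) + β * (-γ * ((∑ i, ℓ (x i)) / C ^ 2))
          + β ^ 2 * (C ^ 2 * exp 1) * ∑ i, ℓ (x i) := by
        gcongr
        refine hd.trans ?_
        nlinarith
    _ = _ := by ring

lemma min_nonneg (g : Good ℓ D E) (x a : Fin m → ℝ)
    (hd : ∑ i, D (x i) * a i < 0) {s : ℝ}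
    (hs : ∑ i, D (x i + s * a i) * a i = 0) : 0 ≤ s := by
  by_contra hneg
  push Not at hneg
  have : ∑ i, D (x i + s * a i) * a i ≤ ∑ i, D (x i) * a i := by
    refine Finset.sum_le_sum fun i _ => ?_
    rcases le_total 0 (a i) with h | h
    · exact mul_le_mul_of_nonneg_right (g.dmono.monotone (by nlinarith)) h
    · exact mul_le_mul_of_nonpos_right (g.dmono.monotone (by nlinarith)) h
  linarith

/-- sharp decrease at low levels -/
lemma fine_step (g : Good ℓ D E) {z δ : ℝ} (hδ0 : 0 < δ) (hδ1 : δ ≤ 1)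
    (h : EB ℓ D E z (exp δ)) (x a : Fin m → ℝ)
    (ha : ∀ i, a i = 1 ∨ a i = -1) (hx : ∑ i, ℓ (x i) ≤ ℓ z) {R ρ : ℝ}
    (hR : 1 < R) (hP0 : 0 < ∑ i, D (x i))
    (hd : ∑ i, D (x i) * a i ≤ - ((R - 1) / (R + 1)) * ∑ i, D (x i))
    (hρ0 : 0 < ρ)
    (hρ : ρ ≤ exp (-2 * δ) * ((exp ((1 - δ) * (log R - 4 * δ) - 4 * δ) - 1) /
      (exp ((1 - δ) * (log R - 4 * δ) - 4 * δ) + 1)))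
    {s : ℝ} (hs : ∀ β, ∑ i, ℓ (x i + s * a i) ≤ ∑ i, ℓ (x i + β * a i)) :
    0 ≤ s ∧ (∑ i, ℓ (x i + δ * s * a i)) * exp (ρ * (δ * s)) ≤ ∑ i, ℓ (x i) := by
  have hs0 : ∑ i, D (x i + s * a i) * a i = 0 :=
    IsLocalMin.hasDerivAt_eq_zero (Filter.Eventually.of_forall hs) (line_deriv g x a s)
  have hRp : 0 < (R - 1) / (R + 1) := div_pos (by linarith) (by linarith)
  have hsn : 0 ≤ s := by
    refine min_nonneg g x a (lt_of_le_of_lt hd ?_) hs0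
    nlinarith
  refine ⟨hsn, ?_⟩
  -- all points lie below z
  have hz : ∀ t, 0 ≤ t → t ≤ s → ∀ i, x i + t * a i ≤ z := by
    intro t ht hts
    apply le_of_sum_le g (fun i => x i + t * a i)
    refine le_trans ?_ hx
    rcases hsn.eq_or_lt with e | hsp
    · have : t = 0 := by linarith
      simp [this]
    · have := line_conv g x a s (t / s) (by positivity) ((div_le_one hsp).2 hts)
      rw [div_mul_cancel₀ _ hsp.ne'] at this
      have h2 := hs 0
      simp only [zero_mul, add_zero] at h2
      have h3 : 0 ≤ t / s := by positivity
      nlinarith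
  have hcc : exp δ ^ 2 = exp (2 * δ) := by rw [← exp_nat_mul]; norm_num
  set P : ℝ → ℝ := fun t => ∑ i, (1 + a i) / 2 * D (x i + t * a i) with hP
  set N : ℝ → ℝ := fun t => ∑ i, (1 - a i) / 2 * D (x i + t * a i) with hN
  have hPN : ∀ t, ∑ i, D (x i + t * a i) * a i = P t - N t := by
    intro t
    rw [hP, hN, ← Finset.sum_sub_distrib]
    exact Finset.sum_congr rfl fun i _ => by ring
  have hPN' : ∀ t, ∑ i, D (x i + t * a i) = P t + N t := by
    intro t
    rw [hP, hN, ← Finset.sum_add_distrib]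
    exact Finset.sum_congr rfl fun i _ => by ring
  have ca : ∀ i, 0 ≤ (1 + a i) / 2 ∧ 0 ≤ (1 - a i) / 2 := by
    intro i
    rcases ha i with e | e <;> rw [e] <;> norm_num
  have Pn : ∀ t, 0 ≤ P t := fun t => Finset.sum_nonneg fun i _ =>
    mul_nonneg (ca i).1 (g.p1 _).le
  have Nn : ∀ t, 0 ≤ N t := fun t => Finset.sum_nonneg fun i _ =>
    mul_nonneg (ca i).2 (g.p1 _).le
  have Pcmp : ∀ t u, 0 ≤ t → t ≤ s → 0 ≤ u → u ≤ s → P t ≤ exp (2 * δ) * exp (t - u) * P u := by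
    intro t u h1 h2 h3 h4
    rw [hP, Finset.mul_sum]
    refine Finset.sum_le_sum fun i _ => ?_
    have := h.cmp g (hz t h1 h2 i) (hz u h3 h4 i)
    rw [hcc] at this
    rcases ha i with e | e
    · rw [e] at this ⊢
      rw [show x i + t * 1 - (x i + u * 1) = t - u by ring] at this
      linarith
    · rw [e]; norm_num
  have Ncmp : ∀ t u, 0 ≤ t → t ≤ s → 0 ≤ u → u ≤ s → N t ≤ exp (2 * δ) * exp (u - t) * N u := by
    intro t u h1 h2 h3 h4
    rw [hN, Finset.mul_sum]
    refine Finset.sum_le_sum fun i _ => ?_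
    have := h.cmp g (hz t h1 h2 i) (hz u h3 h4 i)
    rw [hcc] at this
    rcases ha i with e | e
    · rw [e]; norm_num
    · rw [e] at this ⊢
      rw [show x i + t * -1 - (x i + u * -1) = u - t by ring] at this
      linarith
  have hstar : P s = N s := by have := hPN s; rw [hs0] at this; linarith
  -- lower bound on s
  have hlow : log R - 4 * δ ≤ 2 * s := by
    have e1 := hPN 0
    have e2 := hPN' 0
    simp only [zero_mul, add_zero] at e1 e2
    rw [e1, e2] at hd
    rw [e2] at hP0
    have hR1 : 0 < R + 1 := by linarith
    have h1 : R * P 0 ≤ N 0 := by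
      have := mul_le_mul_of_nonneg_right hd hR1.le
      have h3 : -((R - 1) / (R + 1)) * (P 0 + N 0) * (R + 1) = -(R - 1) * (P 0 + N 0) := by
        field_simp
      rw [h3] at this
      nlinarith
    have h2 := Ncmp 0 s le_rfl hsn hsn le_rfl
    have h3 := Pcmp s 0 hsn le_rfl le_rfl hsn
    simp only [sub_zero] at h2 h3
    have h4 : N 0 ≤ exp (4 * δ + 2 * s) * P 0 := by
      calc N 0 ≤ exp (2 * δ) * exp s * N s := h2
        _ = exp (2 * δ) * exp s * P s := by rw [hstar]
        _ ≤ exp (2 * δ) * exp s * (exp (2 * δ) * exp s * P 0) := by gcongr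
        _ = _ := by
          rw [show 4 * δ + 2 * s = (2 * δ + s) + (2 * δ + s) by ring]
          simp only [exp_add]; ring
    have hPpos : 0 < P 0 := by
      rcases (Pn 0).eq_or_lt with e | e
      · rw [← e] at h4 hP0; linarith
      · exact e
    have h5 : R ≤ exp (4 * δ + 2 * s) := le_of_mul_le_mul_right (h1.trans h4) hPpos
    have := Real.log_le_log (by linarith) h5
    rw [log_exp] at this
    linarith
  set q := exp ((1 - δ) * (log R - 4 * δ) - 4 * δ) with hq
  have hqp : 0 < q := exp_pos _
  have hq1 : 1 < q := by
    by_contra hc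
    push Not at hc
    have : (q - 1) / (q + 1) ≤ 0 := div_nonpos_of_nonpos_of_nonneg (by linarith) (by linarith)
    nlinarith [exp_pos (-2 * δ)]
  -- derivative bound
  have hder : ∀ t, 0 ≤ t → t ≤ δ * s →
      ∑ i, D (x i + t * a i) * a i ≤ - ρ * ∑ i, ℓ (x i + t * a i) := by
    intro t h0 h1
    have hts : t ≤ s := by nlinarith
    have b1 := Pcmp t s h0 hts hsn le_rfl
    have b2 := Ncmp s t hsn le_rfl h0 hts
    have b3 : P t ≤ exp (4 * δ - 2 * (s - t)) * N t := by
      calc P t ≤ exp (2 * δ) * exp (t - s) * P s := b1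
        _ = exp (2 * δ) * exp (t - s) * N s := by rw [hstar]
        _ ≤ exp (2 * δ) * exp (t - s) * (exp (2 * δ) * exp (t - s) * N t) := by gcongr
        _ = _ := by
          rw [show 4 * δ - 2 * (s - t) = (2 * δ + (t - s)) + (2 * δ + (t - s)) by ring]
          simp only [exp_add]; ring
    have b4 : q * P t ≤ N t := by
      have : q * exp (4 * δ - 2 * (s - t)) ≤ 1 := by
        rw [hq, ← exp_add]
        apply exp_le_one_iff.2
        nlinarith
      calc q * P t ≤ q * (exp (4 * δ - 2 * (s - t)) * N t) := by gcongr
        _ = (q * exp (4 * δ - 2 * (s - t))) * N t := by ring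
        _ ≤ 1 * N t := by gcongr; exact Nn t
        _ = _ := by ring
    have b5 : (q - 1) / (q + 1) * (P t + N t) ≤ N t - P t := by
      rw [div_mul_eq_mul_div, div_le_iff₀ (by linarith)]
      nlinarith
    have b6 : ∑ i, ℓ (x i + t * a i) ≤ exp (2 * δ) * (P t + N t) := by
      rw [← hPN', Finset.mul_sum]
      refine Finset.sum_le_sum fun i _ => ?_
      have hh := h.2 _ (hz t h0 hts i)
      calc ℓ (x i + t * a i) ≤ exp δ * exp (x i + t * a i) := hh.1.1
        _ ≤ exp δ * (exp δ * D (x i + t * a i)) := by gcongr; exact hh.2.1.2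
        _ = _ := by rw [← hcc]; ring
    have b7 : ρ * ∑ i, ℓ (x i + t * a i) ≤ N t - P t := by
      refine le_trans ?_ b5
      have hq2 : 0 ≤ (q - 1) / (q + 1) := div_nonneg (by linarith) (by linarith)
      have hsum : 0 ≤ ∑ i, ℓ (x i + t * a i) := Finset.sum_nonneg fun i _ => (g.h0 _).le
      calc ρ * ∑ i, ℓ (x i + t * a i)
          ≤ (exp (-2 * δ) * ((q - 1) / (q + 1))) * (exp (2 * δ) * (P t + N t)) := by
            gcongr
        _ = (exp (-2 * δ) * exp (2 * δ)) * ((q - 1) / (q + 1) * (P t + N t)) := by ring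
        _ = _ := by rw [← exp_add]; simp
    rw [hPN]; linarith
  have hderiv : ∀ t, HasDerivAt (fun t => (∑ i, ℓ (x i + t * a i)) * exp (ρ * t))
      ((∑ i, D (x i + t * a i) * a i) * exp (ρ * t)
        + (∑ i, ℓ (x i + t * a i)) * (exp (ρ * t) * ρ)) t := by
    intro t
    refine (line_deriv g x a t).mul ?_
    have : HasDerivAt (fun t => ρ * t) ρ t := by simpa using (hasDerivAt_id t).const_mul ρ
    exact this.exp
  have hds : 0 ≤ δ * s := by positivity
  have anti : AntitoneOn (fun t => (∑ i, ℓ (x i + t * a i)) * exp (ρ * t)) (Set.Icc 0 (δ * s)) := by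
    apply antitoneOn_of_deriv_nonpos (convex_Icc _ _)
    · exact fun t _ => (hderiv t).continuousAt.continuousWithinAt
    · exact fun t _ => (hderiv t).differentiableAt.differentiableWithinAt
    · intro t ht
      rw [interior_Icc] at ht
      rw [(hderiv t).deriv]
      have := hder t ht.1.le ht.2.le
      have := mul_le_mul_of_nonneg_right this (exp_pos (ρ * t)).le
      linarith
  have := anti (Set.left_mem_Icc.2 hds) (Set.right_mem_Icc.2 hds) hds
  simpa using this

end step

/-- choice of the shrinkage parameter -/
lemma exists_delta {R γ ρ : ℝ} (hR : 1 < R) (hγ : γ = (R - 1) / (R + 1)) (hρ : ρ < γ) :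
    ∃ δ : ℝ, 0 < δ ∧ δ ≤ 1 ∧
      ρ ≤ exp (-2 * δ) * ((exp ((1 - δ) * (log R - 4 * δ) - 4 * δ) - 1) /
      (exp ((1 - δ) * (log R - 4 * δ) - 4 * δ) + 1)) := by
  have hc : Continuous fun δ : ℝ => exp (-2 * δ) * ((exp ((1 - δ) * (log R - 4 * δ) - 4 * δ) - 1) /
      (exp ((1 - δ) * (log R - 4 * δ) - 4 * δ) + 1)) := by
    refine Continuous.mul (by fun_prop) (Continuous.div (by fun_prop) (by fun_prop) ?_)
    intro δ
    positivity
  have ht := hc.tendsto 0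
  have h0 : exp (-2 * (0:ℝ)) * ((exp ((1 - 0) * (log R - 4 * 0) - 4 * 0) - 1) /
      (exp ((1 - 0) * (log R - 4 * 0) - 4 * 0) + 1)) = γ := by
    simp [exp_log (show 0 < R by linarith), hγ]
  rw [h0] at ht
  have h1 := (ht.eventually (lt_mem_nhds hρ)).filter_mono (nhdsWithin_le_nhds (s := Set.Ioi 0))
  have h2 : ∀ᶠ δ : ℝ in nhdsWithin 0 (Set.Ioi 0), δ ∈ Set.Ioc (0:ℝ) 1 :=
    Ioc_mem_nhdsGT (by norm_num)
  obtain ⟨δ, h3, h4⟩ := (h1.and h2).exists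
  exact ⟨δ, h4.1, h4.2, h3.le⟩

lemma gamma_le_gInf {m n : ℕ} (hm : 0 < m) (hn : 0 < n) (A : Matrix (Fin m) (Fin n) ℝ)
    (ℓ : ℝ → ℝ) (lam : Fin n → ℝ) (hpos : ∀ i, 0 < gradL ℓ A lam i) :
    gammaMax A * ∑ i, gradL ℓ A lam i ≤ gInf ℓ A lam := by
  haveI : Nonempty (Fin m) := ⟨⟨0, hm⟩⟩
  haveI : Nonempty (Fin n) := ⟨⟨0, hn⟩⟩
  have hS : 0 < ∑ i, gradL ℓ A lam i := Finset.sum_pos (fun i _ => hpos i) Finset.univ_nonempty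
  rw [← le_div_iff₀ hS]
  apply csSup_le
  · exact ⟨_, Pi.single ⟨0, hn⟩ 1, by simp [Pi.single_apply, apply_ite abs], rfl⟩
  · rintro r ⟨u, hu, rfl⟩
    rw [le_div_iff₀ hS]
    have hg : ∀ j, |∑ i, gradL ℓ A lam i * A i j| ≤ gInf ℓ A lam := fun j =>
      le_ciSup (f := fun j => |∑ i, gradL ℓ A lam i * A i j|) (Set.finite_range _).bddAbove j
    calc (⨅ i, -(A.mulVec u i)) * ∑ i, gradL ℓ A lam i
        = ∑ i, (⨅ i, -(A.mulVec u i)) * gradL ℓ A lam i := Finset.mul_sum _ _ _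
      _ ≤ ∑ i, -(A.mulVec u i) * gradL ℓ A lam i := by
          refine Finset.sum_le_sum fun i _ => ?_
          refine mul_le_mul_of_nonneg_right ?_ (hpos i).le
          exact ciInf_le (f := fun i => -(A.mulVec u i)) (Set.finite_range _).bddBelow i
      _ = ∑ i, ∑ j, -(u j) * (gradL ℓ A lam i * A i j) := by
          refine Finset.sum_congr rfl fun i _ => ?_
          rw [Matrix.mulVec, dotProduct, ← Finset.sum_neg_distrib, Finset.sum_mul]
          exact Finset.sum_congr rfl fun j _ => by ring
      _ = ∑ j, -(u j) * ∑ i, gradL ℓ A lam i * A i j := by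
          rw [Finset.sum_comm]
          exact Finset.sum_congr rfl fun j _ => (Finset.mul_sum _ _ _).symm
      _ ≤ ∑ j, |u j| * gInf ℓ A lam := by
          refine Finset.sum_le_sum fun j _ => ?_
          refine (le_abs_self _).trans ?_
          rw [abs_mul, abs_neg]
          exact mul_le_mul_of_nonneg_left (hg j) (abs_nonneg _)
      _ = gInf ℓ A lam := by rw [← Finset.sum_mul, hu, one_mul]

/-- The abstract dynamical statement. -/
lemma dynamics {m : ℕ} (hm : 0 < m) {ℓ D E : ℝ → ℝ} (g : Good ℓ D E)
    (hEB : ∀ z, ∃ C, EB ℓ D E z C)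
    {R γ ρ δ ε : ℝ} (hR : 1 < R) (hγR : γ = (R - 1) / (R + 1)) (hγ : 0 < γ)
    (hδ0 : 0 < δ) (hδ1 : δ ≤ 1)
    (hEδ : ∃ z, EB ℓ D E z (exp δ)) (hρ0 : 0 < ρ)
    (hρ : ρ ≤ exp (-2 * δ) * ((exp ((1 - δ) * (log R - 4 * δ) - 4 * δ) - 1) /
      (exp ((1 - δ) * (log R - 4 * δ) - 4 * δ) + 1)))
    (hε : 0 < ε)
    (x a : ℕ → Fin m → ℝ) (s nrm : ℕ → ℝ)
    (ha : ∀ t i, a t i = 1 ∨ a t i = -1)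
    (hx : ∀ t i, x (t + 1) i = x t i + δ * s t * a t i)
    (hd : ∀ t, ∑ i, D (x t i) * a t i ≤ - γ * ∑ i, D (x t i))
    (hs : ∀ t β, ∑ i, ℓ (x t i + s t * a t i) ≤ ∑ i, ℓ (x t i + β * a t i))
    (hn : ∀ t, nrm (t + 1) ≤ nrm t + |δ * s t|)
    (hxn : ∀ t i, - x t i ≤ nrm t) :
    ∃ T, ∀ t ≥ T, 0 < nrm t ∧ ∀ i, (ρ - ε) * nrm t ≤ - x t i := by
  haveI : Nonempty (Fin m) := ⟨⟨0, hm⟩⟩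
  set F : ℕ → ℝ := fun t => ∑ i, ℓ (x t i) with hF
  have Fpos : ∀ t, 0 < F t := fun t => Finset.sum_pos (fun i _ => g.h0 _) Finset.univ_nonempty
  have Dpos : ∀ t, 0 < ∑ i, D (x t i) :=
    fun t => Finset.sum_pos (fun i _ => g.p1 _) Finset.univ_nonempty
  have hstep : ∀ t β, F (t + 1) ≤ (1 - δ) * F t + δ * ∑ i, ℓ (x t i + β * a t i) := by
    intro t β
    have h1 := line_conv g (x t) (a t) (s t) δ hδ0.le hδ1
    simp only [hF, hx]
    have h2 := mul_le_mul_of_nonneg_left (hs t β) hδ0.le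
    linarith
  have Fanti : Antitone F := by
    apply antitone_nat_of_succ_le
    intro t
    have := hstep t 0
    simp only [zero_mul, add_zero] at this
    simp only [hF] at this ⊢
    linarith
  -- F tends to zero
  have Fto : ∀ η > 0, ∃ T, ∀ t ≥ T, F t ≤ η := by
    obtain ⟨z, hz⟩ := g.unbdd (F 0)
    obtain ⟨C, hC⟩ := hEB (z + 1)
    have hC1 := hC.1
    have hC0 : 0 < C := by linarith
    have hxz : ∀ t i, x t i ≤ z := fun t =>
      le_of_sum_le g (x t) z ((Fanti (Nat.zero_le t)).trans hz)
    obtain ⟨β, hβ0, hβ1, c, hc0, hβ⟩ : ∃ β : ℝ, 0 ≤ β ∧ β ≤ 1 ∧ ∃ c : ℝ, 0 < c ∧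
        1 - β * γ / C ^ 2 + β ^ 2 * (C ^ 2 * exp 1) ≤ 1 - c := by
      set p := γ / C ^ 2 with hp
      set k := C ^ 2 * exp 1 with hk
      have hp0 : 0 < p := by positivity
      have hk0 : 0 < k := by positivity
      refine ⟨p / (p + 2 * k), by positivity, ?_, (p / (p + 2 * k)) * p / 2, by positivity, ?_⟩
      · rw [div_le_one (by positivity)]; linarith
      · set b := p / (p + 2 * k) with hb
        have hb0 : 0 < b := by positivity
        have h1 : b * k ≤ p / 2 := by
          rw [hb, div_mul_eq_mul_div, div_le_iff₀ (by positivity)]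
          nlinarith
        have : b * γ / C ^ 2 = b * p := by rw [hp]; ring
        rw [this]
        nlinarith
    have hlin : ∀ t, F (t + 1) ≤ (1 - δ * c) * F t := by
      intro t
      have h1 := hstep t β
      have h2 := coarse g hC (x t) (a t) (ha t) (hxz t) hγ (hd t) hβ0 hβ1
      have h3 : ∑ i, ℓ (x t i + β * a t i) ≤ (1 - c) * F t :=
        h2.trans (mul_le_mul_of_nonneg_right hβ (Fpos t).le)
      have h4 := mul_le_mul_of_nonneg_left h3 hδ0.le
      linarith
    have hr0 : 0 < 1 - δ * c := by
      have h1 := hlin 0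
      have h2 := Fpos 1
      have h3 := Fpos 0
      by_contra hneg
      push Not at hneg
      nlinarith
    have hr1 : 1 - δ * c < 1 := by nlinarith
    have hpow : ∀ t, F t ≤ (1 - δ * c) ^ t * F 0 := by
      intro t
      induction t with
      | zero => simp
      | succ k ih =>
        calc F (k + 1) ≤ (1 - δ * c) * F k := hlin k
          _ ≤ (1 - δ * c) * ((1 - δ * c) ^ k * F 0) := by gcongr
          _ = _ := by ring
    intro η hη
    have ht := (tendsto_pow_atTop_nhds_zero_of_lt_one hr0.le hr1).mul_const (F 0)
    rw [zero_mul] at ht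
    obtain ⟨T, hT⟩ := Filter.eventually_atTop.1 (ht.eventually (gt_mem_nhds hη))
    exact ⟨T, fun t h => (hpow t).trans (hT t h).le⟩
  have xto : ∀ M, ∃ T, ∀ t ≥ T, F t ≤ ℓ M ∧ ∀ i, x t i ≤ M := by
    intro M
    obtain ⟨T, hT⟩ := Fto (ℓ M) (g.h0 M)
    exact ⟨T, fun t ht => ⟨hT t ht, le_of_sum_le g (x t) M (hT t ht)⟩⟩
  obtain ⟨z, hz⟩ := hEδ
  obtain ⟨T0, hT0⟩ := xto z
  have hmono : ∀ t ≥ T0, F (t + 1) * exp (ρ * nrm (t + 1)) ≤ F t * exp (ρ * nrm t) := by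
    intro t ht
    have h1 := hd t
    rw [hγR] at h1
    obtain ⟨hs0, h2⟩ := fine_step g hδ0 hδ1 hz (x t) (a t) (ha t) (hT0 t ht).1 hR (Dpos t) h1
      hρ0 hρ (hs t)
    have h3 : F (t + 1) = ∑ i, ℓ (x t i + δ * s t * a t i) := by simp only [hF, hx]
    have h4 := hn t
    rw [abs_of_nonneg (by positivity)] at h4
    have h5 := (Fpos (t + 1)).le
    calc F (t + 1) * exp (ρ * nrm (t + 1)) ≤ F (t + 1) * exp (ρ * (nrm t + δ * s t)) := by gcongr
      _ = F (t + 1) * exp (ρ * (δ * s t)) * exp (ρ * nrm t) := by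
        rw [mul_add, exp_add]; ring
      _ ≤ F t * exp (ρ * nrm t) := by
        gcongr
        rw [h3]; exact h2
  have hbd : ∀ t ≥ T0, F t * exp (ρ * nrm t) ≤ F T0 * exp (ρ * nrm T0) := by
    intro t ht
    induction t, ht using Nat.le_induction with
    | base => exact le_rfl
    | succ k hk ih => exact (hmono k hk).trans ih
  set K := exp δ * (F T0 * exp (ρ * nrm T0)) with hK
  have hKpos : 0 < K := by have := Fpos T0; positivity
  have hx1 : ∀ t ≥ T0, ∀ i, x t i + ρ * nrm t ≤ log K := by
    intro t ht i
    rw [le_log_iff_exp_le hKpos, exp_add]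
    have h1 := (hz.2 _ ((hT0 t ht).2 i)).1.2
    have h2 : ℓ (x t i) ≤ F t :=
      Finset.single_le_sum (f := fun i => ℓ (x t i)) (fun j _ => (g.h0 _).le) (Finset.mem_univ i)
    calc exp (x t i) * exp (ρ * nrm t) ≤ (exp δ * ℓ (x t i)) * exp (ρ * nrm t) := by gcongr
      _ ≤ (exp δ * F t) * exp (ρ * nrm t) := by gcongr
      _ = exp δ * (F t * exp (ρ * nrm t)) := by ring
      _ ≤ K := by rw [hK]; gcongr exp δ * ?_; exact hbd t ht
  obtain ⟨T1, hT1⟩ := xto (-(|log K| / ε + 1))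
  refine ⟨max T0 T1, fun t ht => ?_⟩
  have e0 := hx1 t (le_of_max_le_left ht)
  have e1 := (hT1 t (le_of_max_le_right ht)).2
  have hnr : |log K| / ε + 1 ≤ nrm t := by
    have := e1 ⟨0, hm⟩
    have := hxn t ⟨0, hm⟩
    linarith
  have hq : 0 ≤ |log K| / ε := by positivity
  refine ⟨by linarith, fun i => ?_⟩
  have h1 := e0 i
  have h2 : |log K| ≤ ε * nrm t := by
    have : |log K| / ε ≤ nrm t := by linarith
    rw [div_le_iff₀ hε] at this
    linarith
  have := le_abs_self (log K)
  linarith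

/-- with a binary matrix, a loss in `𝕃_∞`, and shrunk optimal steps,
suitable shrinkage yields margins at least `γ − ε` eventually. -/
theorem margin_opt_binary {m n : ℕ} (hm : 0 < m) (hn : 0 < n)
    (A : Matrix (Fin m) (Fin n) ℝ) (hA : ∀ i j, A i j = 1 ∨ A i j = -1)
    (ℓ : ℝ → ℝ) (hℓ : MemLinf ℓ)
    (hγ : gammaMax A ∈ Set.Ioo (0:ℝ) 1)
    (ε : ℝ) (hε : 0 < ε) :
    ∃ ν ∈ Set.Ioc (0:ℝ) 1,
      ∀ (lam : ℕ → Fin n → ℝ) (α : ℕ → ℝ) (v : ℕ → Fin n → ℝ) (αstar : ℕ → ℝ),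
        IsBoostSeq ℓ A lam α v →
        (∀ t : ℕ, 1 ≤ t → ∀ β : ℝ,
          LL ℓ A (lam (t-1) + αstar t • v t) ≤ LL ℓ A (lam (t-1) + β • v t)) →
        (∀ t : ℕ, 1 ≤ t → α t = ν * αstar t) →
        ∃ T : ℕ, ∀ t ≥ T, margin A (lam t) ≥ gammaMax A - ε := by
  haveI : Nonempty (Fin m) := ⟨⟨0, hm⟩⟩
  have hmR : (0:ℝ) < m := by exact_mod_cast hm
  have g := good_of_memL hℓ.1
  obtain ⟨hγ0, hγ1⟩ := hγ
  set γ := gammaMax A with hγdef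
  have h1γ : 0 < 1 - γ := by linarith
  set ε' := min ε γ with hε'
  have hε'0 : 0 < ε' := lt_min hε hγ0
  have hε'1 : ε' ≤ ε := min_le_left _ _
  have hε'2 : ε' ≤ γ := min_le_right _ _
  have hR : 1 < (1 + γ) / (1 - γ) := by rw [lt_div_iff₀ h1γ]; linarith
  have hγR : γ = ((1 + γ) / (1 - γ) - 1) / ((1 + γ) / (1 - γ) + 1) := by
    have h2 : (1 + γ) / (1 - γ) - 1 = 2 * γ / (1 - γ) := by field_simp; ring
    have h3 : (1 + γ) / (1 - γ) + 1 = 2 / (1 - γ) := by field_simp; ring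
    rw [h2, h3]; field_simp
  obtain ⟨δ, hδ0, hδ1, hδ⟩ := exists_delta hR hγR (show γ - ε' / 2 < γ by linarith)
  refine ⟨δ, ⟨hδ0, hδ1⟩, ?_⟩
  rintro lam α v αstar ⟨-, hlam, hv, hgr⟩ hmin hα
  have hmv : ∀ t (β : ℝ) i, A.mulVec (lam t + β • v (t + 1)) i
      = A.mulVec (lam t) i + β * A.mulVec (v (t + 1)) i := by
    intro t β i
    rw [Matrix.mulVec_add, Matrix.mulVec_smul]
    simp
  have key := dynamics hm g
    (fun z => (hℓ.1.2.2.2 z).imp fun C hC => EB_of_CBound hC) hR hγR hγ0 hδ0 hδ1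
    (exists_EB hℓ (one_lt_exp_iff.2 hδ0)) (show 0 < γ - ε' / 2 by linarith) hδ
    (show 0 < ε' / 2 by linarith)
    (fun t i => A.mulVec (lam t) i) (fun t i => A.mulVec (v (t + 1)) i)
    (fun t => αstar (t + 1)) (fun t => ∑ j, |lam t j|) ?_ ?_ ?_ ?_ ?_ ?_
  · obtain ⟨T, hT⟩ := key
    refine ⟨T, fun t ht => ?_⟩
    obtain ⟨h0, h1⟩ := hT t ht
    refine le_ciInf fun i => ?_
    rw [le_div_iff₀ h0]
    refine le_trans ?_ (h1 i)
    refine mul_le_mul_of_nonneg_right ?_ h0.le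
    linarith
  · intro t i
    obtain ⟨s, hs, j, hj⟩ := hv (t + 1) (by omega)
    have : A.mulVec (v (t + 1)) i = s * A i j := by
      rw [hj, Matrix.mulVec_smul]; simp
    simp only [this]
    rcases hs with rfl | rfl <;> rcases hA i j with e | e <;> simp [e]
  · intro t i
    have := hlam (t + 1) (by omega)
    rw [Nat.add_sub_cancel, hα (t + 1) (by omega)] at this
    simp only [this, hmv]
  · intro t
    have h1 := hgr (t + 1) (by omega)
    rw [Nat.add_sub_cancel] at h1
    have h2 := gamma_le_gInf hm hn A ℓ (lam t) (fun i => div_pos (g.p1 _) hmR)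
    have h3 : ∑ i, gradL ℓ A (lam t) i * A.mulVec (v (t + 1)) i
        = (∑ i, deriv ℓ (A.mulVec (lam t) i) * A.mulVec (v (t + 1)) i) / m := by
      rw [Finset.sum_div]
      exact Finset.sum_congr rfl fun i _ => by simp only [gradL]; ring
    have h4 : ∑ i, gradL ℓ A (lam t) i = (∑ i, deriv ℓ (A.mulVec (lam t) i)) / m := by
      rw [Finset.sum_div]; rfl
    rw [h3] at h1
    rw [h4] at h2
    have h5 : (∑ i, deriv ℓ (A.mulVec (lam t) i) * A.mulVec (v (t + 1)) i) / m ≤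
        (-γ * ∑ i, deriv ℓ (A.mulVec (lam t) i)) / m := by
      rw [h1, mul_div_assoc]; linarith
    exact (div_le_div_iff_of_pos_right hmR).1 h5
  · intro t β
    have h1 := hmin (t + 1) (by omega) β
    rw [Nat.add_sub_cancel] at h1
    simp only [LL, hmv] at h1
    exact (div_le_div_iff_of_pos_right hmR).1 h1
  · intro t
    have h1 := hlam (t + 1) (by omega)
    rw [Nat.add_sub_cancel, hα (t + 1) (by omega)] at h1
    obtain ⟨s, hs, j, hj⟩ := hv (t + 1) (by omega)
    have hsum : ∑ k, |v (t + 1) k| = 1 := by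
      rw [hj]
      rcases hs with rfl | rfl <;> simp [Pi.single_apply, apply_ite abs]
    calc ∑ k, |lam (t + 1) k| ≤ ∑ k, (|lam t k| + |δ * αstar (t + 1)| * |v (t + 1) k|) := by
          refine Finset.sum_le_sum fun k _ => ?_
          rw [h1, ← abs_mul]
          exact abs_add_le _ _
      _ = _ := by rw [Finset.sum_add_distrib, ← Finset.mul_sum, hsum, mul_one]
  · intro t i
    show -(A.mulVec (lam t) i) ≤ ∑ j, |lam t j|
    refine (neg_le_abs _).trans ?_
    rw [Matrix.mulVec, dotProduct]
    refine (Finset.abs_sum_le_sum_abs _ _).trans (Finset.sum_le_sum fun j _ => ?_)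
    rw [abs_mul]
    rcases hA i j with e | e <;> simp [e]
end
end

section
/- Let ℓ ∈ 𝕃, ν ∈ (0,1], τ > 0, suppose γ := max_{‖λ‖₁=1} min_i (−(Aλ)_i) > 0 with γ_i < 1 for all i, and let {λ_t} be boosting iterates whose steps satisfy α_ada_i − τ ≤ α_i ≤ α_ada_i + τ for every i, where α_ada_i := (ν/2)·ln((1+γ_i)/(1−γ_i)). Let θ ∈ [0,γ). Then for all integers t ≥ t₀ ≥ 0 (with λ_{t+1} ≠ 0): Σ_{i=1}^m 1[(−(Aλ_{t+1})_i)/‖λ_{t+1}‖₁ < θ] ≤ m·C_{t+1}·exp(θ·‖λ_{t₀}‖₁)·L(Aλ_{t₀})·Π_{i=t₀+1}^{t+1} [e^{θτ}·((1+γ_i)/(1−γ_i))^{θν/2}·(e^τ·C_i⁴/2)·(1−γ_i²)^{ν/2}·((1+γ_i)^{1−ν} + (1−γ_i)^{1−ν})]. -/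
open Real Finset

noncomputable section

variable {m n : ℕ}

lemma Cconst_facts {ℓ : ℝ → ℝ} (hℓ : MemL ℓ) (z : ℝ) :
    1 ≤ Cconst ℓ z ∧ ∀ x ≤ z, Real.exp x ≤ Cconst ℓ z * ℓ x ∧
      Real.exp x ≤ Cconst ℓ z * deriv ℓ x ∧ deriv ℓ x ≤ Cconst ℓ z * Real.exp x ∧
      0 < deriv ℓ x := by
  obtain ⟨hpos, -, -, hC⟩ := hℓ
  have hne : {C : ℝ | CBound ℓ z C}.Nonempty := hC z
  have hd : ∀ x ≤ z, 0 < deriv ℓ x := by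
    intro x hx
    obtain ⟨C, hC1, hCb⟩ := hC z
    have h := (hCb x hx 1 (by norm_num)).1
    rw [iteratedDeriv_one] at h
    have h2 : 0 < Real.exp x / deriv ℓ x := lt_of_lt_of_le (by positivity) h
    exact (div_pos_iff_of_pos_left (Real.exp_pos x)).1 h2
  refine ⟨le_csInf hne fun C hC => hC.1, fun x hx => ⟨?_, ?_, ?_, hd x hx⟩⟩
  · rw [← div_le_iff₀ (hpos x)]
    refine le_csInf hne fun C hC => ?_
    simpa [iteratedDeriv_zero] using (hC.2 x hx 0 (by norm_num)).2
  · rw [← div_le_iff₀ (hd x hx)]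
    refine le_csInf hne fun C hC => ?_
    simpa [iteratedDeriv_one] using (hC.2 x hx 1 (by norm_num)).2
  · rw [← div_le_iff₀ (Real.exp_pos x)]
    refine le_csInf hne fun C hC => ?_
    have h := (hC.2 x hx 1 (by norm_num)).1
    rw [iteratedDeriv_one] at h
    have hC0 : 0 < C := lt_of_lt_of_le one_pos hC.1
    have := hd x hx
    rw [inv_le_comm₀ hC0 (by positivity), inv_div] at h
    exact h

lemma le_level {m n : ℕ} (hm : 0 < m) {ℓ : ℝ → ℝ} (hℓ : MemL ℓ)
    (A : Matrix (Fin m) (Fin n) ℝ) (lam : Fin n → ℝ) (k : Fin m) :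
    A.mulVec lam k ≤ Function.invFun ℓ ((m : ℝ) * LL ℓ A lam) := by
  have hm' : (m : ℝ) ≠ 0 := by positivity
  have hS : (m : ℝ) * LL ℓ A lam = ∑ i, ℓ (A.mulVec lam i) := by
    unfold LL; field_simp
  rw [hS]
  have hpos := hℓ.1
  have hdiff : Differentiable ℝ ℓ := hℓ.2.1.differentiable (by norm_num)
  have hd : ∀ x, 0 < deriv ℓ x := fun x => ((Cconst_facts hℓ x).2 x le_rfl).2.2.2
  have hmono : StrictMono ℓ := strictMono_of_deriv_pos hd
  set S := ∑ i, ℓ (A.mulVec lam i) with hSdef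
  set x := A.mulVec lam k with hx
  have hxS : ℓ x ≤ S := Finset.single_le_sum (f := fun i => ℓ (A.mulVec lam i))
    (fun i _ => (hpos _).le) (Finset.mem_univ k)
  have hex : ∃ y, ℓ y = S := by
    set y := x + (S - ℓ x) / deriv ℓ x + 1 with hy
    have hq : 0 ≤ (S - ℓ x) / deriv ℓ x := div_nonneg (by linarith) (hd x).le
    have hxy : x < y := by linarith
    have hs := hℓ.2.2.1.convexOn.deriv_le_slope (Set.mem_univ x) (Set.mem_univ y) hxy
      (hdiff x)
    rw [slope_def_field, le_div_iff₀ (by linarith)] at hs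
    have h2 : deriv ℓ x * (y - x) = (S - ℓ x) + deriv ℓ x := by
      have := (hd x).ne'
      rw [hy]; field_simp; ring
    have hSy : S ≤ ℓ y := by linarith [hd x]
    obtain ⟨w, -, hw⟩ := intermediate_value_Icc hxy.le hdiff.continuous.continuousOn ⟨hxS, hSy⟩
    exact ⟨w, hw⟩
  have hinv := Function.invFun_eq hex
  exact hmono.le_iff_le.1 (by rw [hinv]; exact hxS)

lemma Cstep_facts {m n : ℕ} (hm : 0 < m) {ℓ : ℝ → ℝ} (hℓ : MemL ℓ)
    (A : Matrix (Fin m) (Fin n) ℝ) (lam : Fin n → ℝ) :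
    1 ≤ Cstep ℓ A lam ∧ ∀ k, Real.exp (A.mulVec lam k) ≤ Cstep ℓ A lam * ℓ (A.mulVec lam k) ∧
      Real.exp (A.mulVec lam k) ≤ Cstep ℓ A lam * deriv ℓ (A.mulVec lam k) ∧
      deriv ℓ (A.mulVec lam k) ≤ Cstep ℓ A lam * Real.exp (A.mulVec lam k) ∧
      0 < deriv ℓ (A.mulVec lam k) :=
  ⟨(Cconst_facts hℓ _).1, fun k => (Cconst_facts hℓ _).2 _ (le_level hm hℓ A lam k)⟩

lemma exp_mul_le (a u : ℝ) (hu : |u| ≤ 1) :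
    Real.exp (a * u) ≤ (1 + u) / 2 * Real.exp a + (1 - u) / 2 * Real.exp (-a) := by
  obtain ⟨h1, h2⟩ := abs_le.1 hu
  have q1 : 0 ≤ (1 + u) / 2 := by linarith
  have q2 : 0 ≤ (1 - u) / 2 := by linarith
  have h := convexOn_exp.2 (Set.mem_univ a) (Set.mem_univ (-a)) q1 q2 (by ring)
  simp only [smul_eq_mul] at h
  have e : (1 + u) / 2 * a + (1 - u) / 2 * -a = a * u := by ring
  rwa [e] at h

lemma exp_step (g ν τ a : ℝ) (h0 : 0 ≤ g) (h1 : g < 1)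
    (hl : (ν/2) * Real.log ((1 + g) / (1 - g)) - τ ≤ a)
    (hu : a ≤ (ν/2) * Real.log ((1 + g) / (1 - g)) + τ) :
    (1 - g) / 2 * Real.exp a + (1 + g) / 2 * Real.exp (-a) ≤
      Real.exp τ / 2 * (1 - g^2) ^ (ν/2) * ((1 + g) ^ (1-ν) + (1 - g) ^ (1-ν)) := by
  have hp : 0 < 1 + g := by linarith
  have hq : 0 < 1 - g := by linarith
  set P := Real.log (1 + g) with hP
  set Q := Real.log (1 - g) with hQ
  rw [Real.log_div hp.ne' hq.ne'] at hl hu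
  have hpe : 1 + g = Real.exp P := (Real.exp_log hp).symm
  have hqe : 1 - g = Real.exp Q := (Real.exp_log hq).symm
  have e1 : Real.exp a ≤ Real.exp (ν / 2 * (P - Q) + τ) := Real.exp_le_exp.2 hu
  have e2 : Real.exp (-a) ≤ Real.exp (-(ν / 2 * (P - Q)) + τ) :=
    Real.exp_le_exp.2 (by linarith)
  have hr : (1 - g^2) ^ (ν/2) = Real.exp ((P + Q) * (ν/2)) := by
    rw [show 1 - g^2 = (1+g) * (1-g) by ring, Real.rpow_def_of_pos (by positivity),
      Real.log_mul hp.ne' hq.ne']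
  rw [hr, Real.rpow_def_of_pos hp, Real.rpow_def_of_pos hq, ← hP, ← hQ]
  calc (1 - g) / 2 * Real.exp a + (1 + g) / 2 * Real.exp (-a)
      ≤ (1 - g) / 2 * Real.exp (ν / 2 * (P - Q) + τ)
        + (1 + g) / 2 * Real.exp (-(ν / 2 * (P - Q)) + τ) := by gcongr
    _ = (Real.exp Q * Real.exp (ν / 2 * (P - Q) + τ)
        + Real.exp P * Real.exp (-(ν / 2 * (P - Q)) + τ)) / 2 := by
        rw [← hpe, ← hqe]; ring
    _ = Real.exp τ / 2 * Real.exp ((P + Q) * (ν/2)) *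
        (Real.exp (P * (1-ν)) + Real.exp (Q * (1-ν))) := by
        have i1 : Real.exp Q * Real.exp (ν / 2 * (P - Q) + τ) =
            Real.exp τ * Real.exp ((P + Q) * (ν/2)) * Real.exp (Q * (1-ν)) := by
          simp only [← Real.exp_add]
          congr 1; ring
        have i2 : Real.exp P * Real.exp (-(ν / 2 * (P - Q)) + τ) =
            Real.exp τ * Real.exp ((P + Q) * (ν/2)) * Real.exp (P * (1-ν)) := by
          simp only [← Real.exp_add]
          congr 1; ring
        rw [i1, i2]; ring
    _ ≤ _ := le_rfl

/-- The sum of exponentials. -/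
def Esum {m n : ℕ} (A : Matrix (Fin m) (Fin n) ℝ) (lam : Fin n → ℝ) : ℝ :=
  ∑ i, Real.exp (A.mulVec lam i)

lemma gammaHat_nonneg {m n : ℕ} (ℓ : ℝ → ℝ) (A : Matrix (Fin m) (Fin n) ℝ)
    (lam : Fin n → ℝ) : 0 ≤ gammaHat ℓ A lam :=
  div_nonneg (Real.iSup_nonneg fun _ => abs_nonneg _)
    (Finset.sum_nonneg fun _ _ => abs_nonneg _)

lemma Esum_step {m n : ℕ} (hm : 0 < m)
    (A : Matrix (Fin m) (Fin n) ℝ) (hA : ∀ i j, |A i j| ≤ 1)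
    (ℓ : ℝ → ℝ) (hℓ : MemL ℓ) (lam w : Fin n → ℝ) (a s : ℝ) (hs : s = 1 ∨ s = -1)
    (j : Fin n) (hw : w = s • (Pi.single j (1:ℝ) : Fin n → ℝ))
    (hg : ∑ i, gradL ℓ A lam i * A.mulVec w i = - gInf ℓ A lam) :
    Esum A (lam + a • w) ≤ (Cstep ℓ A lam)^2 * Esum A lam *
      ((1 - gammaHat ℓ A lam) / 2 * Real.exp a
        + (1 + gammaHat ℓ A lam) / 2 * Real.exp (-a)) := by
  obtain ⟨hC1, hC⟩ := Cstep_facts hm hℓ A lam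
  set C := Cstep ℓ A lam
  set x := A.mulVec lam with hx
  set u := A.mulVec w with hu
  have hm' : (0:ℝ) < m := by exact_mod_cast hm
  have hu1 : ∀ i, |u i| ≤ 1 := by
    intro i
    have : u i = s * A i j := by
      rw [hu, hw, Matrix.mulVec_smul]; simp
    rw [this, abs_mul]
    rcases hs with rfl | rfl <;> simpa using hA i j
  set D := ∑ i, deriv ℓ (x i) with hD
  have hDpos : 0 < D := by
    have : Nonempty (Fin m) := ⟨⟨0, hm⟩⟩
    exact Finset.sum_pos (fun i _ => (hC i).2.2.2) Finset.univ_nonempty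
  have hone : gOne ℓ A lam = D / m := by
    unfold gOne gradL
    rw [hD, Finset.sum_div]
    refine Finset.sum_congr rfl fun i _ => ?_
    exact abs_of_pos (div_pos (hC i).2.2.2 hm')
  have hinf : gInf ℓ A lam = gammaHat ℓ A lam * (D / m) := by
    unfold gammaHat
    rw [hone]; field_simp
  have hg2 : ∑ i, deriv ℓ (x i) * u i = - gammaHat ℓ A lam * D := by
    have h1 : ∑ i, gradL ℓ A lam i * u i = (∑ i, deriv ℓ (x i) * u i) / m := by
      unfold gradL
      rw [Finset.sum_div]
      exact Finset.sum_congr rfl fun i _ => by rw [← hx]; ring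
    rw [h1, hinf] at hg
    field_simp at hg
    linarith
  set g := gammaHat ℓ A lam
  have hDE : D ≤ C * Esum A lam := by
    unfold Esum
    rw [Finset.mul_sum]
    exact Finset.sum_le_sum fun i _ => (hC i).2.2.1
  have hK : (0:ℝ) ≤ ∑ i, deriv ℓ (x i) * ((1 + u i) / 2 * Real.exp a + (1 - u i) / 2 * Real.exp (-a)) := by
    refine Finset.sum_nonneg fun i _ => mul_nonneg (hC i).2.2.2.le ?_
    exact (Real.exp_pos _).le.trans (exp_mul_le a (u i) (hu1 i))
  have hsum : ∑ i, deriv ℓ (x i) * ((1 + u i) / 2 * Real.exp a + (1 - u i) / 2 * Real.exp (-a))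
      = D * ((1 - g) / 2 * Real.exp a + (1 + g) / 2 * Real.exp (-a)) := by
    have : ∀ i, deriv ℓ (x i) * ((1 + u i) / 2 * Real.exp a + (1 - u i) / 2 * Real.exp (-a))
      = deriv ℓ (x i) * ((Real.exp a + Real.exp (-a)) / 2)
        + deriv ℓ (x i) * u i * ((Real.exp a - Real.exp (-a)) / 2) := fun i => by ring
    simp_rw [this]
    rw [Finset.sum_add_distrib, ← Finset.sum_mul, ← Finset.sum_mul, hg2, ← hD]
    ring
  rw [hsum] at hK
  have hK' : 0 ≤ (1 - g) / 2 * Real.exp a + (1 + g) / 2 * Real.exp (-a) :=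
    nonneg_of_mul_nonneg_right hK hDpos
  calc Esum A (lam + a • w) = ∑ i, Real.exp (x i) * Real.exp (a * u i) := by
        unfold Esum
        refine Finset.sum_congr rfl fun i _ => ?_
        rw [← Real.exp_add, Matrix.mulVec_add, Matrix.mulVec_smul]
        rfl
    _ ≤ ∑ i, (C * deriv ℓ (x i)) *
        ((1 + u i) / 2 * Real.exp a + (1 - u i) / 2 * Real.exp (-a)) := by
        refine Finset.sum_le_sum fun i _ => ?_
        exact mul_le_mul (hC i).2.1 (exp_mul_le a (u i) (hu1 i)) (Real.exp_pos _).le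
          (mul_nonneg (by linarith) (hC i).2.2.2.le)
    _ = C * (D * ((1 - g) / 2 * Real.exp a + (1 + g) / 2 * Real.exp (-a))) := by
        rw [← hsum, Finset.mul_sum]
        exact Finset.sum_congr rfl fun i _ => by ring
    _ ≤ C * ((C * Esum A lam) * ((1 - g) / 2 * Real.exp a + (1 + g) / 2 * Real.exp (-a))) := by
        have : 0 ≤ C := by linarith
        gcongr
    _ = _ := by ring

/-- The per-step factor with a free power of `C`. -/
def fac (θ τ ν g C : ℝ) (k : ℕ) : ℝ :=
  Real.exp (θ*τ) * ((1 + g) / (1 - g)) ^ (θ*ν/2) * (Real.exp τ * C^k / 2) *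
    (1 - g^2) ^ (ν/2) * ((1 + g) ^ (1-ν) + (1 - g) ^ (1-ν))

lemma fac_nonneg (θ τ ν g C : ℝ) (k : ℕ) (h0 : 0 ≤ g) (h1 : g < 1) (hC : 1 ≤ C) :
    0 ≤ fac θ τ ν g C k := by
  have hp : 0 < 1 + g := by linarith
  have hq : 0 < 1 - g := by linarith
  have hr : 0 < 1 - g^2 := by nlinarith
  have : 0 < C := by linarith
  unfold fac
  positivity

lemma fac_mono (θ τ ν g C : ℝ) {k l : ℕ} (hkl : k ≤ l) (h0 : 0 ≤ g) (h1 : g < 1) (hC : 1 ≤ C) :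
    fac θ τ ν g C k ≤ fac θ τ ν g C l := by
  have hp : 0 < 1 + g := by linarith
  have hq : 0 < 1 - g := by linarith
  have hr : 0 < 1 - g^2 := by nlinarith
  unfold fac
  gcongr

lemma full_step {m n : ℕ} (hm : 0 < m)
    (A : Matrix (Fin m) (Fin n) ℝ) (hA : ∀ i j, |A i j| ≤ 1)
    (ℓ : ℝ → ℝ) (hℓ : MemL ℓ) (ν τ θ : ℝ) (hν : 0 < ν) (hτ : 0 < τ) (hθ : 0 ≤ θ)
    (lam w : Fin n → ℝ) (a s : ℝ) (hs : s = 1 ∨ s = -1)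
    (j : Fin n) (hw : w = s • (Pi.single j (1:ℝ) : Fin n → ℝ))
    (hg : ∑ i, gradL ℓ A lam i * A.mulVec w i = - gInf ℓ A lam)
    (h1 : gammaHat ℓ A lam < 1)
    (hl : (ν/2) * Real.log ((1 + gammaHat ℓ A lam) / (1 - gammaHat ℓ A lam)) - τ ≤ a)
    (hu : a ≤ (ν/2) * Real.log ((1 + gammaHat ℓ A lam) / (1 - gammaHat ℓ A lam)) + τ) :
    Real.exp (θ * ∑ k, |(lam + a • w) k|) * Esum A (lam + a • w) ≤
      fac θ τ ν (gammaHat ℓ A lam) (Cstep ℓ A lam) 2 *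
        (Real.exp (θ * ∑ k, |lam k|) * Esum A lam) := by
  have h0 := gammaHat_nonneg ℓ A lam
  have hE := Esum_step hm A hA ℓ hℓ lam w a s hs j hw hg
  have hC1 := (Cstep_facts hm hℓ A lam).1
  set g := gammaHat ℓ A lam
  set C := Cstep ℓ A lam
  have hp : 0 < 1 + g := by linarith
  have hq : 0 < 1 - g := by linarith
  have hX := exp_step g ν τ a h0 h1 hl hu
  have hE0 : ∀ l, 0 ≤ Esum A l := fun l => Finset.sum_nonneg fun i _ => (Real.exp_pos _).le
  have hlog : 0 ≤ Real.log ((1 + g) / (1 - g)) := by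
    apply Real.log_nonneg
    rw [le_div_iff₀ hq]; linarith
  have ha : |a| ≤ (ν/2) * Real.log ((1 + g) / (1 - g)) + τ := by
    have : 0 ≤ (ν/2) * Real.log ((1 + g) / (1 - g)) := by positivity
    rw [abs_le]; constructor <;> linarith
  have hw1 : ∑ k, |w k| = 1 := by
    rw [hw]
    have hs1 : |s| = 1 := by rcases hs with rfl | rfl <;> simp
    simp only [Pi.smul_apply, smul_eq_mul, abs_mul, hs1, one_mul]
    rw [Finset.sum_eq_single j] <;> simp +contextual [Pi.single_apply]
  have hnorm : ∑ k, |(lam + a • w) k| ≤ ∑ k, |lam k| + |a| := by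
    calc ∑ k, |(lam + a • w) k| ≤ ∑ k, (|lam k| + |a| * |w k|) := by
          refine Finset.sum_le_sum fun k _ => ?_
          rw [← abs_mul]; exact abs_add_le _ _
      _ = _ := by rw [Finset.sum_add_distrib, ← Finset.mul_sum, hw1, mul_one]
  have hexp : Real.exp (θ * ∑ k, |(lam + a • w) k|) ≤
      Real.exp (θ * ∑ k, |lam k|) * (Real.exp (θ*τ) * ((1 + g) / (1 - g)) ^ (θ*ν/2)) := by
    rw [Real.rpow_def_of_pos (by positivity), ← Real.exp_add, ← Real.exp_add]
    apply Real.exp_le_exp.2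
    have := mul_le_mul_of_nonneg_left (hnorm.trans (add_le_add_right ha _)) hθ
    linarith
  calc _ ≤ (Real.exp (θ * ∑ k, |lam k|) * (Real.exp (θ*τ) * ((1 + g) / (1 - g)) ^ (θ*ν/2))) *
        (C^2 * Esum A lam * (Real.exp τ / 2 * (1 - g^2) ^ (ν/2) *
          ((1 + g) ^ (1-ν) + (1 - g) ^ (1-ν)))) := by
        refine mul_le_mul hexp (hE.trans ?_) (hE0 _) (by positivity)
        exact mul_le_mul_of_nonneg_left hX (mul_nonneg (by positivity) (hE0 _))
    _ = _ := by unfold fac; ring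

/-- general margin-distribution bound for steps within `τ` of the
AdaBoost step. -/
theorem margin_distribution_near_ada {m n : ℕ} (hm : 0 < m) (hn : 0 < n)
    (A : Matrix (Fin m) (Fin n) ℝ) (hA : ∀ i j, |A i j| ≤ 1)
    (ℓ : ℝ → ℝ) (hℓ : MemL ℓ)
    (ν : ℝ) (hν : ν ∈ Set.Ioc (0:ℝ) 1) (τ : ℝ) (hτ : 0 < τ)
    (hγpos : 0 < gammaMax A)
    (lam : ℕ → Fin n → ℝ) (α : ℕ → ℝ) (v : ℕ → Fin n → ℝ)
    (hseq : IsBoostSeq ℓ A lam α v)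
    (hγlt : ∀ i : ℕ, 1 ≤ i → gammaHat ℓ A (lam (i-1)) < 1)
    (hstep : ∀ i : ℕ, 1 ≤ i →
      (ν/2) * Real.log
          ((1 + gammaHat ℓ A (lam (i-1))) / (1 - gammaHat ℓ A (lam (i-1)))) - τ ≤ α i ∧
      α i ≤ (ν/2) * Real.log
          ((1 + gammaHat ℓ A (lam (i-1))) / (1 - gammaHat ℓ A (lam (i-1)))) + τ)
    (θ : ℝ) (hθ0 : 0 ≤ θ) (hθ : θ < gammaMax A)
    (t₀ t : ℕ) (ht : t₀ ≤ t) (hne : lam (t+1) ≠ 0) :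
    ((Finset.univ.filter (fun i : Fin m =>
        (-(A.mulVec (lam (t+1)) i)) / (∑ j, |lam (t+1) j|) < θ)).card : ℝ) ≤
      (m:ℝ) * Cstep ℓ A (lam t) * Real.exp (θ * ∑ j, |lam t₀ j|) * LL ℓ A (lam t₀) *
        ∏ i ∈ Finset.Icc (t₀+1) (t+1),
          (Real.exp (θ*τ) *
            ((1 + gammaHat ℓ A (lam (i-1))) / (1 - gammaHat ℓ A (lam (i-1)))) ^ (θ*ν/2) *
            (Real.exp τ * (Cstep ℓ A (lam (i-1)))^4 / 2) *
            (1 - (gammaHat ℓ A (lam (i-1)))^2) ^ (ν/2) *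
            ((1 + gammaHat ℓ A (lam (i-1))) ^ (1-ν) +
              (1 - gammaHat ℓ A (lam (i-1))) ^ (1-ν))) := by
  have hrec : ∀ s : ℕ, Real.exp (θ * ∑ k, |lam (s+1) k|) * Esum A (lam (s+1)) ≤
      fac θ τ ν (gammaHat ℓ A (lam s)) (Cstep ℓ A (lam s)) 2 *
        (Real.exp (θ * ∑ k, |lam s k|) * Esum A (lam s)) := by
    intro s
    obtain ⟨-, hupd, hdir, hgr⟩ := hseq
    obtain ⟨σ, hσ, j, hj⟩ := hdir (s+1) (by omega)
    have h1 := hupd (s+1) (by omega)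
    have h2 := hgr (s+1) (by omega)
    have h3 := hγlt (s+1) (by omega)
    have h4 := hstep (s+1) (by omega)
    simp only [Nat.add_sub_cancel] at h1 h2 h3 h4
    rw [h1]
    exact full_step hm A hA ℓ hℓ ν τ θ hν.1 hτ hθ0 _ _ _ σ hσ j hj h2 h3 h4.1 h4.2
  have hCf := fun s => Cstep_facts hm hℓ A (lam s)
  have hg0 := fun s => gammaHat_nonneg ℓ A (lam s)
  have hg1 : ∀ s, gammaHat ℓ A (lam s) < 1 := fun s => by simpa using hγlt (s+1) (by omega)
  have hE0 : ∀ l, 0 ≤ Esum A l := fun l => Finset.sum_nonneg fun i _ => (Real.exp_pos _).le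
  have hm' : (0:ℝ) < m := by exact_mod_cast hm
  have hL0 : ∀ l, 0 ≤ LL ℓ A l := fun l =>
    div_nonneg (Finset.sum_nonneg fun i _ => (hℓ.1 _).le) hm'.le
  have hEL : ∀ s, Esum A (lam s) ≤ Cstep ℓ A (lam s) * (m * LL ℓ A (lam s)) := by
    intro s
    have hS : (m : ℝ) * LL ℓ A (lam s) = ∑ i, ℓ (A.mulVec (lam s) i) := by
      unfold LL; field_simp
    rw [hS, Finset.mul_sum]
    exact Finset.sum_le_sum fun i _ => ((hCf s).2 i).1
  have main : ∀ t, t₀ ≤ t → Real.exp (θ * ∑ k, |lam (t+1) k|) * Esum A (lam (t+1)) ≤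
      (m * Real.exp (θ * ∑ j, |lam t₀ j|) * LL ℓ A (lam t₀)) *
        ∏ i ∈ Finset.Icc (t₀+1) (t+1),
          fac θ τ ν (gammaHat ℓ A (lam (i-1))) (Cstep ℓ A (lam (i-1))) 4 := by
    intro t ht
    induction t, ht using Nat.le_induction with
    | base =>
      rw [Finset.Icc_self, Finset.prod_singleton, Nat.add_sub_cancel]
      have hf := fac_nonneg θ τ ν _ _ 2 (hg0 t₀) (hg1 t₀) (hCf t₀).1
      have hf3 := fac_mono θ τ ν _ _ (show 3 ≤ 4 by norm_num) (hg0 t₀) (hg1 t₀) (hCf t₀).1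
      have hX : 0 ≤ m * Real.exp (θ * ∑ j, |lam t₀ j|) * LL ℓ A (lam t₀) :=
        mul_nonneg (by positivity) (hL0 _)
      calc _ ≤ _ := hrec t₀
        _ ≤ fac θ τ ν (gammaHat ℓ A (lam t₀)) (Cstep ℓ A (lam t₀)) 2 *
            (Real.exp (θ * ∑ k, |lam t₀ k|) *
              (Cstep ℓ A (lam t₀) * (m * LL ℓ A (lam t₀)))) := by
            have := hEL t₀
            gcongr
        _ = (m * Real.exp (θ * ∑ j, |lam t₀ j|) * LL ℓ A (lam t₀)) *
            fac θ τ ν (gammaHat ℓ A (lam t₀)) (Cstep ℓ A (lam t₀)) 3 := by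
            unfold fac; ring
        _ ≤ _ := mul_le_mul_of_nonneg_left hf3 hX
    | succ s hs ih =>
      rw [Finset.prod_Icc_succ_top (by omega), Nat.add_sub_cancel]
      have hf := fac_nonneg θ τ ν _ _ 4 (hg0 (s+1)) (hg1 (s+1)) (hCf (s+1)).1
      have hf3 := fac_mono θ τ ν _ _ (show 2 ≤ 4 by norm_num) (hg0 (s+1)) (hg1 (s+1)) (hCf (s+1)).1
      calc _ ≤ _ := hrec (s+1)
        _ ≤ fac θ τ ν (gammaHat ℓ A (lam (s+1))) (Cstep ℓ A (lam (s+1))) 4 *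
            (Real.exp (θ * ∑ k, |lam (s+1) k|) * Esum A (lam (s+1))) :=
            mul_le_mul_of_nonneg_right hf3 (mul_nonneg (Real.exp_pos _).le (hE0 _))
        _ ≤ _ := mul_le_mul_of_nonneg_left ih hf
        _ = _ := by ring
  have hN : 0 < ∑ j, |lam (t+1) j| := by
    obtain ⟨j, hj⟩ := Function.ne_iff.1 hne
    exact Finset.sum_pos' (fun _ _ => abs_nonneg _) ⟨j, Finset.mem_univ _, abs_pos.2 hj⟩
  have hcount : ((Finset.univ.filter (fun i : Fin m =>
        (-(A.mulVec (lam (t+1)) i)) / (∑ j, |lam (t+1) j|) < θ)).card : ℝ) ≤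
      Real.exp (θ * ∑ k, |lam (t+1) k|) * Esum A (lam (t+1)) := by
    rw [Finset.card_filter]
    push_cast
    unfold Esum
    rw [Finset.mul_sum]
    refine Finset.sum_le_sum fun i _ => ?_
    split_ifs with h
    · rw [div_lt_iff₀ hN] at h
      rw [← Real.exp_add]
      exact Real.one_le_exp (by linarith)
    · positivity
  have hfin := hcount.trans (main t ht)
  have hX : 0 ≤ (m * Real.exp (θ * ∑ j, |lam t₀ j|) * LL ℓ A (lam t₀)) *
        ∏ i ∈ Finset.Icc (t₀+1) (t+1),
          fac θ τ ν (gammaHat ℓ A (lam (i-1))) (Cstep ℓ A (lam (i-1))) 4 :=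
    (Nat.cast_nonneg _).trans hfin
  refine (hfin.trans (le_mul_of_one_le_left hX (hCf t).1)).trans (le_of_eq ?_)
  unfold fac
  ring
end
end

section
/- For every ν ∈ (0,1] and every γ ∈ (0,1): γ/2 ≤ Υ_ν(γ) ≤ γ. -/
open Real Finset

noncomputable section

variable {m n : ℕ}

/-- `γ/2 ≤ Υ_ν(γ) ≤ γ` for `ν ∈ (0,1]` and `γ ∈ (0,1)`. -/
theorem upsilon_bounds (ν γ : ℝ) (hν : ν ∈ Set.Ioc (0:ℝ) 1) (hγ : γ ∈ Set.Ioo (0:ℝ) 1) :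
    γ/2 ≤ Upsilon ν γ ∧ Upsilon ν γ ≤ γ := by
  obtain ⟨hν0, hν1⟩ := hν
  obtain ⟨h0, h1⟩ := hγ
  have hp : 0 < 1 + γ := by linarith
  have hq : 0 < 1 - γ := by linarith
  have hD : 0 < Real.log (1+γ) - Real.log (1-γ) :=
    sub_pos.2 (Real.log_lt_log hq (by linarith))
  have hab : Real.log (1-γ^2) = Real.log (1+γ) + Real.log (1-γ) := by
    rw [← Real.log_mul hp.ne' hq.ne']; congr 1; ring
  have hS : 0 < (1+γ) ^ (1-ν) + (1-γ) ^ (1-ν) := by positivity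
  unfold Upsilon
  rw [le_div_iff₀ hD, div_le_iff₀ hD]
  constructor
  · have e1 : (1+γ) ^ (1-ν) ≤ 1 + (1-ν) * γ :=
      rpow_one_add_le_one_add_mul_self (by linarith) (by linarith) (by linarith)
    have e2 : (1+(-γ)) ^ (1-ν) ≤ 1 + (1-ν) * (-γ) :=
      rpow_one_add_le_one_add_mul_self (by linarith) (by linarith) (by linarith)
    rw [← sub_eq_add_neg] at e2
    have e3 : Real.log ((1+γ) ^ (1-ν) + (1-γ) ^ (1-ν)) ≤ Real.log 2 :=
      Real.log_le_log hS (by linarith)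
    have e4 : (2/ν) * Real.log ((1+γ) ^ (1-ν) + (1-γ) ^ (1-ν)) ≤ (2/ν) * Real.log 2 :=
      mul_le_mul_of_nonneg_left e3 (by positivity)
    have s1 := Real.hasSum_pow_div_log_of_abs_lt_one (x := γ^2)
      (by rw [abs_of_nonneg (by positivity)]; nlinarith)
    have s2 := (Real.hasSum_log_sub_log_of_abs_lt_one (x := γ)
      (by rw [abs_of_pos h0]; exact h1)).mul_left (γ/2)
    have e5 : γ/2 * (Real.log (1+γ) - Real.log (1-γ)) ≤ - Real.log (1-γ^2) := by
      refine hasSum_le (fun k => ?_) s2 s1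
      have : γ / 2 * (2 * (1 / (2 * (k:ℝ) + 1)) * γ ^ (2 * k + 1))
          = (γ ^ 2) ^ (k + 1) / (2 * (k:ℝ) + 1) := by
        rw [← pow_mul]; field_simp; ring
      rw [this]
      gcongr
      linarith [(Nat.cast_nonneg k : (0:ℝ) ≤ k)]
    linarith
  · set a := Real.log (1+γ) with ha
    set b := Real.log (1-γ) with hb
    have ea : (1+γ) ^ (1-ν) = (1+γ) * Real.exp (-ν*a) := by
      rw [Real.rpow_sub hp, Real.rpow_one, Real.rpow_def_of_pos hp, ← ha, div_eq_mul_inv,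
        ← Real.exp_neg]; ring_nf
    have eb : (1-γ) ^ (1-ν) = (1-γ) * Real.exp (-ν*b) := by
      rw [Real.rpow_sub hq, Real.rpow_one, Real.rpow_def_of_pos hq, ← hb, div_eq_mul_inv,
        ← Real.exp_neg]; ring_nf
    obtain ⟨c, hc⟩ : ∃ c, c = -ν * ((1+γ)/2*a + (1-γ)/2*b) := ⟨_, rfl⟩
    have key : ∀ u, Real.exp c * (1 + (u - c)) ≤ Real.exp u := fun u => by
      have : Real.exp u = Real.exp c * Real.exp (u - c) := by rw [← Real.exp_add]; ring_nf
      rw [this]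
      exact mul_le_mul_of_nonneg_left (by linarith [Real.add_one_le_exp (u - c)])
        (Real.exp_pos c).le
    have k1 := mul_le_mul_of_nonneg_left (key (-ν*a)) hp.le
    have k2 := mul_le_mul_of_nonneg_left (key (-ν*b)) hq.le
    have k3 : (1+γ) * (Real.exp c * (1 + (-ν*a - c))) + (1-γ) * (Real.exp c * (1 + (-ν*b - c)))
        = 2 * Real.exp c := by
      have : (1+γ) * (1 + (-ν*a - c)) + (1-γ) * (1 + (-ν*b - c)) = 2 := by rw [hc]; ring
      linear_combination Real.exp c * this
    have k4 : Real.log 2 + c ≤ Real.log ((1+γ) ^ (1-ν) + (1-γ) ^ (1-ν)) := by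
      rw [← Real.log_exp c, ← Real.log_mul two_ne_zero (Real.exp_pos c).ne']
      apply Real.log_le_log (by positivity)
      rw [ea, eb]; linarith
    have k5 := mul_le_mul_of_nonneg_left k4 (by positivity : 0 ≤ 2/ν)
    have k6 : 2/ν * c = -((1+γ)*a + (1-γ)*b) := by rw [hc]; field_simp
    rw [hab]
    linarith
end
end

section
/- For every fixed γ ∈ (0,1): lim_{ν → 0⁺} Υ_ν(γ) = γ. -/
open Real Finset

noncomputable section

variable {m n : ℕ}

/-- `Υ_ν(γ) → γ` as `ν → 0⁺`, for fixed `γ ∈ (0,1)`. -/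
theorem upsilon_tendsto (γ : ℝ) (hγ : γ ∈ Set.Ioo (0:ℝ) 1) :
    Filter.Tendsto (fun ν => Upsilon ν γ) (nhdsWithin 0 (Set.Ioi 0)) (nhds γ) := by
  obtain ⟨h0, h1⟩ := hγ
  have hp : 0 < 1 + γ := by linarith
  have hm : 0 < 1 - γ := by linarith
  have hlt : Real.log (1-γ) < Real.log (1+γ) := Real.log_lt_log hm (by linarith)
  have hD : Real.log (1+γ) - Real.log (1-γ) ≠ 0 := by
    intro h
    linarith
  have hl : Real.log (1-γ^2) = Real.log (1+γ) + Real.log (1-γ) := by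
    rw [← Real.log_mul hp.ne' hm.ne']
    congr 1
    ring
  have hid : HasDerivAt (fun ν : ℝ => 1 - ν) (-1) 0 := by
    simpa using (hasDerivAt_id (0:ℝ)).const_sub 1
  have e1 := hid.const_rpow hp
  have e2 := hid.const_rpow hm
  have e3 := (e1.add e2).log (by simp)
  have e4 := hasDerivAt_iff_tendsto_slope_zero.1 e3
  have e5 := e4.mono_left (nhdsWithin_mono (0:ℝ)
    (fun x (hx : x ∈ Set.Ioi (0:ℝ)) => (ne_of_gt hx : x ≠ 0)))
  have e6 := ((e5.const_mul (-2)).sub_const (Real.log (1-γ^2))).div_const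
    (Real.log (1+γ) - Real.log (1-γ))
  have h2 : (1 + γ) + (1 - γ) = 2 := by ring
  refine (e6.congr' ?_).trans (le_of_eq ?_)
  · filter_upwards with ν
    simp only [Upsilon, Pi.add_apply, zero_add, sub_zero, Real.rpow_one, smul_eq_mul, h2]
    congr 2
    ring
  · congr 1
    simp only [Pi.add_apply, sub_zero, Real.rpow_one, h2]
    rw [hl]
    field_simp
    ring
end
end

section
/- Let ν ∈ (0,1] and θ ∈ [0,1]. The function f(γ) := ((1+γ)/(1−γ))^{θν/2}·(1−γ²)^{ν/2}·((1+γ)^{1−ν} + (1−γ)^{1−ν}) is nonincreasing on the interval [θ, 1), i.e. for all θ ≤ γ₁ ≤ γ₂ < 1 one has f(γ₂) ≤ f(γ₁). -/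
open Real Finset

noncomputable section

variable {m n : ℕ}

/-- the map
`γ ↦ ((1+γ)/(1−γ))^{θν/2}·(1−γ²)^{ν/2}·((1+γ)^{1−ν}+(1−γ)^{1−ν})`
is nonincreasing on `[θ,1)`. -/
theorem upsilon_map_antitone (ν θ : ℝ) (hν : ν ∈ Set.Ioc (0:ℝ) 1)
    (hθ : θ ∈ Set.Icc (0:ℝ) 1)
    (γ₁ γ₂ : ℝ) (h1 : θ ≤ γ₁) (h12 : γ₁ ≤ γ₂) (h2 : γ₂ < 1) :
    ((1+γ₂)/(1-γ₂)) ^ (θ*ν/2) * (1-γ₂^2) ^ (ν/2) *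
        ((1+γ₂) ^ (1-ν) + (1-γ₂) ^ (1-ν)) ≤
      ((1+γ₁)/(1-γ₁)) ^ (θ*ν/2) * (1-γ₁^2) ^ (ν/2) *
        ((1+γ₁) ^ (1-ν) + (1-γ₁) ^ (1-ν)) := by
  have hν0 := hν.1
  have hν1 := hν.2
  have hθ0 := hθ.1
  have hg1 : 0 ≤ γ₁ := hθ0.trans h1
  have ha1 : 0 < 1 + γ₁ := by linarith
  have ha2 : 0 < 1 + γ₂ := by linarith
  have hb1 : 0 < 1 - γ₁ := by linarith
  have hb2 : 0 < 1 - γ₂ := by linarith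
  have key : ∀ γ : ℝ, 0 < 1 + γ → 0 < 1 - γ →
      ((1+γ)/(1-γ)) ^ (θ*ν/2) * (1-γ^2) ^ (ν/2) =
        Real.exp (ν/2 * ((1+θ) * Real.log (1+γ) + (1-θ) * Real.log (1-γ))) := by
    intro γ ha hb
    have e : 1 - γ^2 = (1+γ)*(1-γ) := by ring
    rw [e, Real.rpow_def_of_pos (div_pos ha hb), Real.rpow_def_of_pos (mul_pos ha hb),
      Real.log_div ha.ne' hb.ne', Real.log_mul ha.ne' hb.ne', ← Real.exp_add]
    congr 1
    ring
  rw [key γ₂ ha2 hb2, key γ₁ ha1 hb1]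
  apply mul_le_mul
  · apply Real.exp_le_exp.mpr
    apply mul_le_mul_of_nonneg_left _ (by linarith)
    have l1 := Real.log_le_sub_one_of_pos (div_pos ha2 ha1)
    have l2 := Real.log_le_sub_one_of_pos (div_pos hb2 hb1)
    rw [Real.log_div ha2.ne' ha1.ne'] at l1
    rw [Real.log_div hb2.ne' hb1.ne'] at l2
    have m1 := mul_le_mul_of_nonneg_left l1 (show 0 ≤ 1 + θ by linarith)
    have m2 := mul_le_mul_of_nonneg_left l2 (show 0 ≤ 1 - θ by linarith)
    have m3 : (1+θ) * ((1+γ₂)/(1+γ₁) - 1) + (1-θ) * ((1-γ₂)/(1-γ₁) - 1) ≤ 0 := by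
      have e : (1+θ) * ((1+γ₂)/(1+γ₁) - 1) + (1-θ) * ((1-γ₂)/(1-γ₁) - 1)
          = -(2 * (γ₂-γ₁) * (γ₁-θ) / ((1+γ₁)*(1-γ₁))) := by
        field_simp
        ring
      rw [e]
      have : 0 ≤ 2 * (γ₂-γ₁) * (γ₁-θ) / ((1+γ₁)*(1-γ₁)) := by
        apply div_nonneg _ (mul_pos ha1 hb1).le
        apply mul_nonneg <;> linarith
      linarith
    linarith
  · rcases eq_or_lt_of_le (hg1.trans h12) with h0 | h0
    · have : γ₁ = γ₂ := by linarith
      rw [this]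
    · have hc := (Real.concaveOn_rpow (p := 1 - ν) (by linarith) (by linarith)).2
      have ht : 0 ≤ (γ₂+γ₁)/(2*γ₂) := by positivity
      have hu : 0 ≤ (γ₂-γ₁)/(2*γ₂) := div_nonneg (by linarith) (by linarith)
      have hs : (γ₂+γ₁)/(2*γ₂) + (γ₂-γ₁)/(2*γ₂) = 1 := by field_simp; ring
      have c1 := hc (Set.mem_Ici.mpr ha2.le) (Set.mem_Ici.mpr hb2.le) ht hu hs
      have c2 := hc (Set.mem_Ici.mpr hb2.le) (Set.mem_Ici.mpr ha2.le) ht hu hs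
      simp only [smul_eq_mul] at c1 c2
      have e1 : (γ₂+γ₁)/(2*γ₂) * (1+γ₂) + (γ₂-γ₁)/(2*γ₂) * (1-γ₂) = 1 + γ₁ := by
        field_simp; ring
      have e2 : (γ₂+γ₁)/(2*γ₂) * (1-γ₂) + (γ₂-γ₁)/(2*γ₂) * (1+γ₂) = 1 - γ₁ := by
        field_simp; ring
      rw [e1] at c1
      rw [e2] at c2
      calc (1+γ₂) ^ (1-ν) + (1-γ₂) ^ (1-ν)
          = ((γ₂+γ₁)/(2*γ₂) + (γ₂-γ₁)/(2*γ₂)) * ((1+γ₂) ^ (1-ν) + (1-γ₂) ^ (1-ν)) := by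
            rw [hs, one_mul]
        _ ≤ _ := by linarith
  · positivity
  · positivity
end
end
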